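/- arXiv:2511.00257 — 2 statements merged into one kernel-verified Lean document; each statement's English description precedes it below -/
import Mathlib

section
/- In the reduced BwE setting with parameters k ≥ 1 and n > 10, let T ≥ k·ln(n/10) and set ε = √( k·ln(n/10) / (100·T) ) (so 0 < ε ≤ 0.1). Then for every learner there exists a strategy S in the pool {S_0} ∪ {S_{(u,v)} : u ∈ [k], v ∈ [n]} (with this ε) under which the learner's pseudo-regret over T rounds satisfies R_T > √( T·k·ln(n/10) ) / 100000. -/
open scoped BigOperators ENNReal

/-! ## The reduced BwE setting

There are `K = 2k+1` arms: arm `0` (encoded `none`) and arms `(u,i)` for `u ∈ [k]`,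
`i ∈ {0,1}` (encoded `some (u, i)`), and `N = kn+1` experts: expert `0` (encoded `none`,
always advising arm `0`) and experts `(u,v)` for `u ∈ [k]`, `v ∈ [n]`
(encoded `some (u, v)`, advising arm `(u, a_t^{(u,v)})`). -/

/-- An arm: `none` is arm `0`, `some (u, i)` is arm `(u,i)` of batch `u`. -/
abbrev RArm (k : ℕ) := Option (Fin k × Bool)

/-- The advice state: for each batch `u`, the advice vector `a^{(u)} ∈ {0,1}ⁿ`. -/
abbrev RAdviceM (k n : ℕ) := Fin k → Fin n → Bool

/-- An expert: `none` is expert `0`, `some (u, v)` is expert `(u,v)` of batch `u`. -/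
abbrev RExpert (k n : ℕ) := Option (Fin k × Fin n)

/-- The loss state of a round: the correct arm `c_u` of every batch `u` (the arm
`(u, c_u)` has loss `0` and the arm `(u, ¬c_u)` has loss `1`), together with the
binary loss of arm `0`. -/
abbrev RLossState (k : ℕ) := (Fin k → Bool) × Bool

/-- A full record of one round: the advice state, the loss state, and the pulled arm. -/
abbrev RRecord (k n : ℕ) := RAdviceM k n × RLossState k × RArm k

/-- What the learner observes in one round: the advice state, the arm it pulled,
and the loss of that arm only. -/
abbrev RObs (k n : ℕ) := RAdviceM k n × RArm k × Bool

/-- A strategy from the pool: `none` is `S_0`, and `some (u*, v*)` is `S_{(u*,v*)}`. -/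
abbrev RStrategy (k n : ℕ) := Option (Fin k × Fin n)

/-- The `{0,1}`-loss (as a `Bool`, `true` = loss `1`) of an arm, given the loss state. -/
def armLoss {k : ℕ} (L : RLossState k) : RArm k → Bool
  | none => L.2
  | some (u, i) => if i = L.1 u then false else true

/-- The loss of an arm as a real number in `{0,1}`. -/
noncomputable def lossVal (b : Bool) : ℝ := if b then 1 else 0

/-- The batch of an arm (`none` = batch `0`). -/
def armBatch {k : ℕ} : RArm k → Option (Fin k) := Option.map Prod.fst

/-- The arm advised by an expert, given the advice state. -/
def expertArm {k n : ℕ} (A : RAdviceM k n) : RExpert k n → RArm k :=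
  Option.map fun p => (p.1, A p.1 p.2)

/-- The special batch of a strategy: batch `0` (i.e. `none`) for `S_0`,
and batch `u*` for `S_{(u*,v*)}`. -/
def specialBatch {k n : ℕ} : RStrategy k n → Option (Fin k) := Option.map Prod.fst

/-- Density of the advice process given the history (most recent record first):
in the first round the advice state is uniform; afterwards, batch `u`'s advice vector
is resampled uniformly from `{0,1}ⁿ` if an arm of batch `u` was pulled in the previous
round, and is kept unchanged otherwise. -/
noncomputable def adviceDensity {k n : ℕ} (hist : List (RRecord k n)) (A : RAdviceM k n) : ℝ :=
  match hist with
  | [] => (1 / 2 : ℝ) ^ (k * n)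
  | r :: _ =>
      ∏ u : Fin k,
        if armBatch r.2.2 = some u then (1 / 2 : ℝ) ^ n
        else if A u = r.1 u then 1 else 0

/-- Density of the correct arm of batch `u`: uniform under `S_0` and for all
non-special batches; under `S_{(u*,v*)}` the correct arm of batch `u*` equals
the advice `a^{(u*,v*)}` of expert `(u*,v*)` with probability `1/2 + ε`. -/
noncomputable def batchFactor {k n : ℕ} (ε : ℝ) (s : RStrategy k n) (A : RAdviceM k n)
    (c : Fin k → Bool) (u : Fin k) : ℝ :=
  match s with
  | none => 1 / 2
  | some (u', v') =>
      if u = u' then (if c u = A u v' then 1 / 2 + ε else 1 / 2 - ε) else 1 / 2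

/-- Density of the loss state: arm `0` has loss `1` with probability `1/2 − ε/2`
(i.e. `ℓ_t(0) ∼ Ber(1/2 − ε/2)`), and the correct arms are drawn independently
according to `batchFactor`. -/
noncomputable def lossDensity {k n : ℕ} (ε : ℝ) (s : RStrategy k n) (A : RAdviceM k n)
    (L : RLossState k) : ℝ :=
  (if L.2 then 1 / 2 - ε / 2 else 1 / 2 + ε / 2) * ∏ u : Fin k, batchFactor ε s A L.1 u

/-- Density of the adversary's round output (advice state and loss state) given the
history, under strategy `s` with bias `ε`. -/
noncomputable def stratDensity {k n : ℕ} (ε : ℝ) (s : RStrategy k n)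
    (hist : List (RRecord k n)) (A : RAdviceM k n) (L : RLossState k) : ℝ :=
  adviceDensity hist A * lossDensity ε s A L

/-- A (randomized) learner: given the observed history (most recent first) and the
current round's advice state, a density over which arm to pull. -/
def RLearner (k n : ℕ) := List (RObs k n) → RAdviceM k n → RArm k → ℝ

/-- The learner's values form probability distributions over arms. -/
def IsRLearner {k n : ℕ} (f : RLearner k n) : Prop :=
  ∀ h A, (∀ i, 0 ≤ f h A i) ∧ ∑ i : RArm k, f h A i = 1

/-- The learner's observation extracted from a full record: it sees the advice,
its pulled arm, and only the loss of the pulled arm. -/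
def obsOf {k n : ℕ} (r : RRecord k n) : RObs k n := (r.1, r.2.2, armLoss r.2.1 r.2.2)

/-- The history of the first `t` rounds of a trajectory, most recent first. -/
def histUpTo {k n T : ℕ} (g : Fin T → RRecord k n) (t : ℕ) : List (RRecord k n) :=
  ((List.ofFn g).take t).reverse

/-- The learner's observed history of the first `t` rounds, most recent first. -/
def obsHist {k n T : ℕ} (g : Fin T → RRecord k n) (t : ℕ) : List (RObs k n) :=
  (histUpTo g t).map obsOf

/-- Probability of a full `T`-round trajectory under strategy `s` and learner `L`
(product of the adversary's and the learner's densities, round by round). -/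
noncomputable def trajProb {k n : ℕ} (ε : ℝ) (s : RStrategy k n) (L : RLearner k n) (T : ℕ)
    (g : Fin T → RRecord k n) : ℝ :=
  ∏ t : Fin T,
    stratDensity ε s (histUpTo g t) (g t).1 (g t).2.1 *
      L (obsHist g t) (g t).1 (g t).2.2

/-- Expectation of a trajectory functional over the `T`-round interaction. -/
noncomputable def expectR {k n : ℕ} (ε : ℝ) (s : RStrategy k n) (L : RLearner k n) (T : ℕ)
    (f : (Fin T → RRecord k n) → ℝ) : ℝ :=
  ∑ g : Fin T → RRecord k n, trajProb ε s L T g * f g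

/-- The realized regret of a trajectory against expert `j`:
`Σ_t (ℓ_t(I_t) − ℓ_t(e_t(j)))`. -/
noncomputable def regretVs {k n T : ℕ} (g : Fin T → RRecord k n) (j : RExpert k n) : ℝ :=
  ∑ t : Fin T,
    (lossVal (armLoss (g t).2.1 (g t).2.2) - lossVal (armLoss (g t).2.1 (expertArm (g t).1 j)))

/-- The pseudo-regret over `T` rounds: `max_j E[Σ_t (ℓ_t(I_t) − ℓ_t(e_t(j)))]`. -/
noncomputable def pseudoRegret {k n : ℕ} (ε : ℝ) (s : RStrategy k n) (L : RLearner k n)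
    (T : ℕ) : ℝ :=
  ⨆ j : RExpert k n, expectR ε s L T fun g => regretVs g j

/-!
Only the observed history matters, so a strategy is a process on histories, and playing against
`S_(u,v)` instead of `S_0` multiplies its law by a likelihood ratio that changes only when batch `u`
is pulled. Stop this ratio after `m` pulls of batch `u`. The mean over `v` of the stopped ratios has
a bounded second moment: on the diagonal each pull contributes a factor at most `1 + 4ε²`, and for
`v ≠ v'` the two advice bits are uncorrelated when batch `u` has just been resampled, so that only
the factor of the next pull, at least `1 - 4ε²`, can be outstanding. Hence `m` pulls of batch `u`
are almost as unlikely under a random `S_(u,v)` as under `S_0`.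

With `m ≈ T / (2k)`, a learner that explores every batch `m` times pays `ε / 2` per pull under
`S_0`, while one that leaves batch `u` unexplored pays `ε / 2` in at least half of the rounds under
some `S_(u,v)`.
-/

namespace ReducedBwE

section Densities

variable {ι α β : Type*} [Fintype α]

lemma sum_prod_mul_eval [Fintype ι] [DecidableEq ι] {w : ι → α → ℝ}
    (hw : ∀ i, ∑ a, w i a = 1) (i₀ : ι) (φ : α → ℝ) :
    ∑ x : ι → α, (∏ i, w i (x i)) * φ (x i₀) = ∑ a, w i₀ a * φ a := by
  have absorb : ∀ x : ι → α, (∏ i, w i (x i)) * φ (x i₀)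
      = ∏ i, w i (x i) * if i = i₀ then φ (x i) else 1 := fun x => by
    rw [Finset.prod_mul_distrib, Fintype.prod_ite_eq']
  simp only [absorb]
  rw [← Fintype.prod_sum fun i a => w i a * if i = i₀ then φ a else 1,
    Fintype.prod_eq_single i₀ fun i hi => by simp [hi, hw]]
  simp

lemma sum_prod_eq_one [Fintype ι] [DecidableEq ι] {w : ι → α → ℝ} (hw : ∀ i, ∑ a, w i a = 1) :
    ∑ x : ι → α, ∏ i, w i (x i) = 1 := by
  rw [← Fintype.prod_sum]
  exact Finset.prod_eq_one fun i _ => hw i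

lemma prod_mem_stdSimplex [Fintype ι] [DecidableEq ι] {w : ι → α → ℝ}
    (hw : ∀ i, w i ∈ stdSimplex ℝ α) :
    (fun x : ι → α => ∏ i, w i (x i)) ∈ stdSimplex ℝ (ι → α) :=
  ⟨fun x => Finset.prod_nonneg fun i _ => (hw i).1 (x i), sum_prod_eq_one fun i => (hw i).2⟩

lemma mul_mem_stdSimplex_prod [Fintype β] {p : α → ℝ} {κ : α → β → ℝ}
    (hp : p ∈ stdSimplex ℝ α) (hκ : ∀ a, κ a ∈ stdSimplex ℝ β) :
    (fun x : α × β => p x.1 * κ x.1 x.2) ∈ stdSimplex ℝ (α × β) :=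
  ⟨fun x => mul_nonneg (hp.1 _) ((hκ _).1 _), by
    simp only [Fintype.sum_prod_type, ← Finset.mul_sum, (hκ _).2, mul_one, hp.2]⟩

end Densities

section LikelihoodRatio

variable {O : Type*} {r : List O → O → ℝ} {S : Set (List O)}

/-- Product along a history of the one-step ratios `r h o`, that is, the density of the process
with transitions `q * r` with respect to the one with transitions `q`. -/
noncomputable def likelihoodRatio (r : List O → O → ℝ) : List O → ℝ
  | [] => 1
  | o :: h => r h o * likelihoodRatio r h

open Classical in
/-- The one-step ratios `r` until the history enters `S`, and `1` from then on; their
`likelihoodRatio` is that of `r` stopped when the history enters `S`. -/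
noncomputable def stopRatio (S : Set (List O)) (r : List O → O → ℝ) : List O → O → ℝ :=
  fun h o => if h ∈ S then 1 else r h o

lemma likelihoodRatio_nonneg (hr : ∀ h o, 0 ≤ r h o) (h : List O) : 0 ≤ likelihoodRatio r h := by
  induction h with
  | nil => exact zero_le_one
  | cons o h ih => exact mul_nonneg (hr h o) ih

lemma likelihoodRatio_stopRatio (hS : ∀ h o, h ∈ S → o :: h ∈ S) {h : List O} (hh : h ∉ S) :
    likelihoodRatio (stopRatio S r) h = likelihoodRatio r h := by
  induction h with
  | nil => rfl
  | cons o h ih =>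
    have hh' : h ∉ S := mt (hS h o) hh
    simp only [likelihoodRatio, stopRatio, hh', if_false, ih hh']

end LikelihoodRatio

lemma ofFn_snoc {α : Type*} {T : ℕ} (g : Fin T → α) (a : α) :
    List.ofFn (Fin.snoc g a : Fin (T + 1) → α) = List.ofFn g ++ [a] := by
  rw [List.ofFn_succ_last]
  simp only [Fin.snoc_castSucc, Fin.snoc_last]

section HistoryProcess

variable {O O' : Type*} [Fintype O]

/-- Conditional expectation of a functional of the next history given the current one, for the
process on the alphabet `O` whose next symbol has density `q h` given the history `h`. Histories
list the most recent symbol first. -/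
noncomputable def stepExpect (q : List O → O → ℝ) : (List O → ℝ) →ₗ[ℝ] (List O → ℝ) :=
  LinearMap.pi fun h => ∑ o, q h o • LinearMap.proj (o :: h)

/-- Expectation of a functional of the history after `T` steps of the process with transition
densities `q`. -/
noncomputable def histExpect (q : List O → O → ℝ) (T : ℕ) : (List O → ℝ) →ₗ[ℝ] ℝ :=
  LinearMap.proj [] ∘ₗ stepExpect q ^ T

/-- Probability that the history after `T` steps of the process with transition densities `q`
lies in `S`. -/
noncomputable def histProb (q : List O → O → ℝ) (T : ℕ) (S : Set (List O)) : ℝ :=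
  histExpect q T (S.indicator 1)

variable {q r : List O → O → ℝ} {S : Set (List O)}

lemma stepExpect_apply (q : List O → O → ℝ) (F : List O → ℝ) (h : List O) :
    stepExpect q F h = ∑ o, q h o * F (o :: h) := by
  simp [stepExpect]

lemma histExpect_zero (q : List O → O → ℝ) (F : List O → ℝ) : histExpect q 0 F = F [] := rfl

lemma histExpect_succ (q : List O → O → ℝ) (T : ℕ) (F : List O → ℝ) :
    histExpect q (T + 1) F = histExpect q T (stepExpect q F) := by
  simp [histExpect, pow_succ]

lemma histExpect_mono (hq : ∀ h o, 0 ≤ q h o) {T : ℕ} {F G : List O → ℝ}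
    (hFG : ∀ h, h.length = T → F h ≤ G h) : histExpect q T F ≤ histExpect q T G := by
  induction T generalizing F G with
  | zero => exact hFG [] rfl
  | succ T ih =>
    rw [histExpect_succ, histExpect_succ]
    refine ih fun h hh => ?_
    rw [stepExpect_apply, stepExpect_apply]
    gcongr with o
    · exact hq h o
    · exact hFG _ (by simp [hh])

lemma histExpect_eq_of_stepExpect_eq {F : List O → ℝ} (hF : stepExpect q F = F) (T : ℕ) :
    histExpect q T F = F [] := by
  induction T with
  | zero => rfl
  | succ T ih => rw [histExpect_succ, hF, ih]

lemma histExpect_one (hq : ∀ h, ∑ o, q h o = 1) (T : ℕ) : histExpect q T 1 = 1 :=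
  histExpect_eq_of_stepExpect_eq (funext fun h => by simp [stepExpect_apply, hq]) T

lemma histProb_compl (hq : ∀ h, ∑ o, q h o = 1) (T : ℕ) (S : Set (List O)) :
    histProb q T Sᶜ = 1 - histProb q T S := by
  rw [histProb, Set.indicator_compl, map_sub, histExpect_one hq, histProb]

lemma mul_histProb_le_histExpect (hq : ∀ h o, 0 ≤ q h o) (T : ℕ) {X : List O → ℝ}
    (hX : ∀ h, 0 ≤ X h) (c : ℝ) : c * histProb q T {h | c ≤ X h} ≤ histExpect q T X := by
  rw [histProb, ← smul_eq_mul, ← map_smul]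
  refine histExpect_mono hq fun h _ => ?_
  by_cases hc : c ≤ X h <;> simp [hc, hX]

lemma histExpect_sum_map_mono (hq : ∀ h, q h ∈ stdSimplex ℝ O) (T : ℕ) {c d : O → ℝ}
    (hdc : ∀ h, ∑ o, q h o * d o ≤ ∑ o, q h o * c o) :
    histExpect q T (fun h => (h.map d).sum) ≤ histExpect q T fun h => (h.map c).sum := by
  induction T with
  | zero => simp [histExpect_zero]
  | succ T ih =>
    have step : ∀ f : O → ℝ, stepExpect q (fun h => (h.map f).sum)
        = (fun h => ∑ o, q h o * f o) + fun h => (h.map f).sum := fun f => by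
      funext h
      simp only [stepExpect_apply, List.map_cons, List.sum_cons, mul_add,
        Finset.sum_add_distrib, ← Finset.sum_mul, (hq h).2, one_mul, Pi.add_apply]
    rw [histExpect_succ, histExpect_succ, step, step, map_add, map_add]
    exact add_le_add (histExpect_mono (fun h => (hq h).1) fun h _ => hdc h) ih

lemma histExpect_comp_map [Fintype O'] {q' : List O' → O' → ℝ} {f : O → O'}
    (hf : ∀ h (φ : O' → ℝ), ∑ o, q h o * φ (f o) = ∑ o', q' (h.map f) o' * φ o')
    (T : ℕ) (F : List O' → ℝ) :
    histExpect q T (fun h => F (h.map f)) = histExpect q' T F := by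
  induction T generalizing F with
  | zero => rfl
  | succ T ih =>
    rw [histExpect_succ, histExpect_succ, ← ih]
    congr 1
    funext h
    simp only [stepExpect_apply, List.map_cons, hf h fun o' => F (o' :: h.map f)]

lemma sum_prod_mul_eq_histExpect (q : List O → O → ℝ) (T : ℕ) (F : List O → ℝ) :
    ∑ g : Fin T → O, (∏ t : Fin T, q ((List.ofFn g).take t).reverse (g t)) *
      F (List.ofFn g).reverse = histExpect q T F := by
  induction T generalizing F with
  | zero => simp [histExpect_zero]
  | succ T ih =>
    rw [histExpect_succ, ← ih, ← (Fin.snocEquiv fun _ : Fin (T + 1) => O).sum_comp,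
      Fintype.sum_prod_type, Finset.sum_comm]
    refine Finset.sum_congr rfl fun g _ => ?_
    rw [stepExpect_apply, Finset.mul_sum]
    refine Finset.sum_congr rfl fun o _ => ?_
    have take_append : ∀ t ≤ T, (List.ofFn g ++ [o]).take t = (List.ofFn g).take t :=
      fun t ht => List.take_append_of_le_length (by simpa using ht)
    have take_all : (List.ofFn g).take T = List.ofFn g := List.take_of_length_le (by simp)
    change (∏ t : Fin (T + 1), q ((List.ofFn (Fin.snoc g o : Fin (T + 1) → O)).take t).reverse
      ((Fin.snoc g o : Fin (T + 1) → O) t)) *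
        F (List.ofFn (Fin.snoc g o : Fin (T + 1) → O)).reverse = _
    simp only [Fin.prod_univ_castSucc, Fin.snoc_castSucc, Fin.snoc_last, Fin.val_castSucc,
      Fin.val_last, ofFn_snoc, take_append _ le_rfl, take_append _ (Fin.is_lt _).le, take_all,
      List.reverse_append, List.reverse_singleton, List.singleton_append, mul_assoc]

lemma histExpect_mul (q r : List O → O → ℝ) (T : ℕ) (F : List O → ℝ) :
    histExpect (q * r) T F = histExpect q T (likelihoodRatio r * F) := by
  induction T generalizing F with
  | zero => simp [histExpect_zero, likelihoodRatio]
  | succ T ih =>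
    rw [histExpect_succ, histExpect_succ, ih]
    congr 1
    funext h
    simp only [stepExpect_apply, likelihoodRatio, Pi.mul_apply, Finset.mul_sum]
    exact Finset.sum_congr rfl fun o _ => by ring

/-- The two laws agree until the history enters `S`, hence on `Sᶜ`, hence on `S`. -/
lemma histProb_mul_stopRatio (hq : ∀ h, ∑ o, q h o = 1) (hqr : ∀ h, ∑ o, (q * r) h o = 1)
    (hS : ∀ h o, h ∈ S → o :: h ∈ S) (T : ℕ) :
    histProb (q * stopRatio S r) T S = histProb (q * r) T S := by
  have hqs : ∀ h, ∑ o, (q * stopRatio S r) h o = 1 := fun h => by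
    by_cases hh : h ∈ S
    · simpa [stopRatio, hh] using hq h
    · simpa [stopRatio, hh] using hqr h
  have hcompl : histProb (q * stopRatio S r) T Sᶜ = histProb (q * r) T Sᶜ := by
    rw [histProb, histProb, histExpect_mul, histExpect_mul]
    congr 1
    funext h
    by_cases hh : h ∈ S
    · simp [hh]
    · simp [hh, likelihoodRatio_stopRatio hS hh]
  rw [histProb_compl hqs, histProb_compl hqr] at hcompl
  linarith

lemma sum_histExpect_mul_indicator_le {ι : Type*} [Fintype ι] [Nonempty ι]
    (hq : ∀ h o, 0 ≤ q h o) (T : ℕ) (Z : ι → List O → ℝ) (S : Set (List O)) :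
    ∑ i, histExpect q T (Z i * S.indicator 1) ≤ Fintype.card ι * histProb q T S
      + (4 * Fintype.card ι : ℝ)⁻¹ * ∑ i, ∑ j, histExpect q T (Z i * Z j) := by
  have hN : (0 : ℝ) < Fintype.card ι := by exact_mod_cast Fintype.card_pos
  simp only [histProb, ← smul_eq_mul, ← map_sum, ← map_smul, ← map_add]
  refine histExpect_mono hq fun h _ => ?_
  have hsq : (∑ i, ∑ j, Z i * Z j) h = (∑ i, Z i h) ^ 2 := by
    simp only [Finset.sum_apply, Pi.mul_apply, sq, Finset.sum_mul_sum]
  simp only [Pi.add_apply, Pi.smul_apply, hsq, smul_eq_mul, Finset.sum_apply, Pi.mul_apply,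
    ← Finset.sum_mul]
  set N := (Fintype.card ι : ℝ)
  set z := ∑ i, Z i h
  by_cases hh : h ∈ S
  · have amgm : N * 1 + (4 * N)⁻¹ * z ^ 2 - z * 1 = (4 * N)⁻¹ * (z - 2 * N) ^ 2 := by
      field_simp
      ring
    have : 0 ≤ (4 * N)⁻¹ * (z - 2 * N) ^ 2 := by positivity
    simp only [Set.indicator_of_mem hh, Pi.one_apply]
    linarith
  · simp only [Set.indicator_of_notMem hh, mul_zero, zero_add]
    positivity

end HistoryProcess

variable {k n : ℕ} {ε : ℝ} {L : RLearner k n}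

section RoundDensities

/-- Density of the correct arm of batch `u` in one round. -/
noncomputable def correctArmDensity (ε : ℝ) (s : RStrategy k n) (A : RAdviceM k n) (u : Fin k)
    (c : Bool) : ℝ :=
  batchFactor ε s A (fun _ => c) u

/-- Density of the observed loss of a pulled arm, where `true` is loss `1`; arm `(u, i)` has
loss `b` when the correct arm of batch `u` is `xor b i`. -/
noncomputable def armLossDensity (ε : ℝ) (s : RStrategy k n) (A : RAdviceM k n) :
    RArm k → Bool → ℝ
  | none, b => if b then 1 / 2 - ε / 2 else 1 / 2 + ε / 2
  | some (u, i), b => correctArmDensity ε s A u (xor b i)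

/-- Density of the next advice vector of batch `u` given the observed history. -/
noncomputable def batchAdviceDensity (u : Fin k) : List (RObs k n) → (Fin n → Bool) → ℝ
  | [], _ => (1 / 2) ^ n
  | o :: _, a => if armBatch o.2.1 = some u then (1 / 2) ^ n else if a = o.1 u then 1 else 0

/-- Density of the next advice state given the observed history, which determines it as well as
the full history does. -/
noncomputable def obsAdviceDensity (h : List (RObs k n)) (A : RAdviceM k n) : ℝ :=
  ∏ u, batchAdviceDensity u h (A u)

/-- Density of the next full record given the observed history. -/
noncomputable def recordDensity (ε : ℝ) (s : RStrategy k n) (L : RLearner k n)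
    (h : List (RObs k n)) (r : RRecord k n) : ℝ :=
  obsAdviceDensity h r.1 * (lossDensity ε s r.1 r.2.1 * L h r.1 r.2.2)

/-- Density of the next observation given the observed history. -/
noncomputable def obsDensity (ε : ℝ) (s : RStrategy k n) (L : RLearner k n)
    (h : List (RObs k n)) (o : RObs k n) : ℝ :=
  obsAdviceDensity h o.1 * (L h o.1 o.2.1 * armLossDensity ε s o.1 o.2.1 o.2.2)

lemma sum_correctArmDensity (ε : ℝ) (s : RStrategy k n) (A : RAdviceM k n) (u : Fin k) :
    ∑ c, correctArmDensity ε s A u c = 1 := by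
  rcases s with _ | ⟨u', v⟩
  · simp [correctArmDensity, batchFactor]
  · simp only [correctArmDensity, batchFactor, Fintype.sum_bool]
    cases A u v <;> split_ifs <;> first | contradiction | ring

lemma correctArmDensity_mem_stdSimplex (hε : 0 ≤ ε) (hε' : ε ≤ 1 / 2) (s : RStrategy k n)
    (A : RAdviceM k n) (u : Fin k) : correctArmDensity ε s A u ∈ stdSimplex ℝ Bool := by
  refine ⟨fun c => ?_, sum_correctArmDensity ε s A u⟩
  rcases s with _ | ⟨u', v⟩ <;> simp only [correctArmDensity, batchFactor]
  · positivity
  · split_ifs <;> linarith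

lemma lossDensity_eq (ε : ℝ) (s : RStrategy k n) (A : RAdviceM k n) (ℓ : RLossState k) :
    lossDensity ε s A ℓ
      = armLossDensity ε s A none ℓ.2 * ∏ u, correctArmDensity ε s A u (ℓ.1 u) := by
  cases s <;> rfl

lemma sum_lossDensity_mul_armLoss (ε : ℝ) (s : RStrategy k n) (A : RAdviceM k n) (I : RArm k)
    (φ : Bool → ℝ) :
    ∑ ℓ, lossDensity ε s A ℓ * φ (armLoss ℓ I) = ∑ b, armLossDensity ε s A I b * φ b := by
  have correct := sum_correctArmDensity ε s A
  have arm0 : ∑ b, armLossDensity ε s A none b = 1 := by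
    simp only [armLossDensity, Fintype.sum_bool, if_true, Bool.false_eq_true, if_false]
    ring
  simp only [lossDensity_eq, Fintype.sum_prod_type]
  rcases I with _ | ⟨u, i⟩
  · have := sum_prod_eq_one correct
    rw [Finset.sum_comm]
    simp only [armLoss, mul_right_comm _ (∏ _, _), ← Finset.mul_sum, this, mul_one]
  · calc
      _ = ∑ c : Fin k → Bool, (∏ u, correctArmDensity ε s A u (c u)) * φ (xor (c u) i) := by
        refine Finset.sum_congr rfl fun c _ => ?_
        have : ∀ b, armLoss (c, b) (some (u, i)) = xor (c u) i := fun b => by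
          cases hc : c u <;> cases i <;> simp [armLoss, hc]
        simp only [this, mul_assoc, ← Finset.sum_mul, arm0, one_mul]
      _ = ∑ c, correctArmDensity ε s A u c * φ (xor c i) :=
        sum_prod_mul_eval correct u fun c => φ (xor c i)
      _ = _ := by
        simp only [armLossDensity, Fintype.sum_bool]
        cases i <;> simp [add_comm]

lemma sum_armLossDensity (ε : ℝ) (s : RStrategy k n) (A : RAdviceM k n) (I : RArm k) :
    ∑ b, armLossDensity ε s A I b = 1 := by
  rcases I with _ | ⟨u, i⟩
  · simp only [armLossDensity, Fintype.sum_bool, if_true, Bool.false_eq_true, if_false]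
    ring
  · rw [← sum_correctArmDensity ε s A u]
    cases i <;> simp [armLossDensity, add_comm]

lemma armLossDensity_mem_stdSimplex (hε : 0 ≤ ε) (hε' : ε ≤ 1 / 2) (s : RStrategy k n)
    (A : RAdviceM k n) (I : RArm k) : armLossDensity ε s A I ∈ stdSimplex ℝ Bool := by
  refine ⟨fun b => ?_, sum_armLossDensity ε s A I⟩
  rcases I with _ | ⟨u, i⟩ <;> simp only [armLossDensity]
  · split_ifs <;> linarith
  · exact (correctArmDensity_mem_stdSimplex hε hε' s A u).1 _

lemma lossDensity_mem_stdSimplex (hε : 0 ≤ ε) (hε' : ε ≤ 1 / 2) (s : RStrategy k n)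
    (A : RAdviceM k n) : lossDensity ε s A ∈ stdSimplex ℝ (RLossState k) := by
  have hc := prod_mem_stdSimplex fun u => correctArmDensity_mem_stdSimplex hε hε' s A u
  have h0 := armLossDensity_mem_stdSimplex hε hε' s A none
  refine ⟨fun ℓ => ?_, ?_⟩
  · rw [lossDensity_eq]
    exact mul_nonneg (h0.1 _) (hc.1 _)
  · have := sum_lossDensity_mul_armLoss ε s A none 1
    simpa only [Pi.one_apply, mul_one, sum_armLossDensity] using this

lemma batchAdviceDensity_mem_stdSimplex (u : Fin k) (h : List (RObs k n)) :
    batchAdviceDensity u h ∈ stdSimplex ℝ (Fin n → Bool) := by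
  have uniform : ∑ _a : Fin n → Bool, (1 / 2 : ℝ) ^ n = 1 := by
    simp
  rcases h with _ | ⟨o, h⟩ <;> refine ⟨fun a => ?_, ?_⟩ <;> simp only [batchAdviceDensity]
  · positivity
  · exact uniform
  · split_ifs <;> positivity
  · split_ifs
    · exact uniform
    · exact Fintype.sum_ite_eq' _ _

lemma obsAdviceDensity_mem_stdSimplex (h : List (RObs k n)) :
    obsAdviceDensity h ∈ stdSimplex ℝ (RAdviceM k n) :=
  prod_mem_stdSimplex fun u => batchAdviceDensity_mem_stdSimplex u h

lemma obsDensity_mem_stdSimplex (hε : 0 ≤ ε) (hε' : ε ≤ 1 / 2) (s : RStrategy k n)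
    (hL : IsRLearner L) (h : List (RObs k n)) :
    obsDensity ε s L h ∈ stdSimplex ℝ (RObs k n) :=
  mul_mem_stdSimplex_prod (obsAdviceDensity_mem_stdSimplex h) fun A =>
    mul_mem_stdSimplex_prod (hL h A) fun I => armLossDensity_mem_stdSimplex hε hε' s A I

lemma recordDensity_mem_stdSimplex (hε : 0 ≤ ε) (hε' : ε ≤ 1 / 2) (s : RStrategy k n)
    (hL : IsRLearner L) (h : List (RObs k n)) :
    recordDensity ε s L h ∈ stdSimplex ℝ (RRecord k n) :=
  mul_mem_stdSimplex_prod (obsAdviceDensity_mem_stdSimplex h) fun A =>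
    mul_mem_stdSimplex_prod (lossDensity_mem_stdSimplex hε hε' s A) fun _ => hL h A

lemma sum_obsDensity (ε : ℝ) (s : RStrategy k n) (hL : IsRLearner L) (h : List (RObs k n)) :
    ∑ o, obsDensity ε s L h o = 1 := by
  simp only [obsDensity, Fintype.sum_prod_type, ← Finset.mul_sum, sum_armLossDensity, mul_one,
    (hL h _).2, (obsAdviceDensity_mem_stdSimplex h).2]

lemma adviceDensity_eq (hist : List (RRecord k n)) (A : RAdviceM k n) :
    adviceDensity hist A = obsAdviceDensity (hist.map obsOf) A := by
  cases hist with
  | nil => simp [adviceDensity, obsAdviceDensity, batchAdviceDensity, ← pow_mul, mul_comm n]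
  | cons r hist => rfl

lemma sum_recordDensity_mul (ε : ℝ) (s : RStrategy k n) (L : RLearner k n)
    (h : List (RObs k n)) (φ : RRecord k n → ℝ) :
    ∑ r, recordDensity ε s L h r * φ r
      = ∑ A, obsAdviceDensity h A * ∑ I, L h A I * ∑ ℓ, lossDensity ε s A ℓ * φ (A, ℓ, I) := by
  simp only [Fintype.sum_prod_type (f := fun r : RRecord k n => recordDensity ε s L h r * φ r),
    Fintype.sum_prod_type (f := fun x : RLossState k × RArm k => recordDensity ε s L h (_, x) *
      φ (_, x))]
  refine Finset.sum_congr rfl fun A _ => ?_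
  rw [Finset.sum_comm, Finset.mul_sum]
  simp only [recordDensity, Finset.mul_sum]
  exact Finset.sum_congr rfl fun I _ => Finset.sum_congr rfl fun ℓ _ => by ring

lemma sum_recordDensity_mul_obsOf (ε : ℝ) (s : RStrategy k n) (L : RLearner k n)
    (h : List (RObs k n)) (φ : RObs k n → ℝ) :
    ∑ r, recordDensity ε s L h r * φ (obsOf r) = ∑ o, obsDensity ε s L h o * φ o := by
  rw [sum_recordDensity_mul]
  simp only [obsOf, fun A I => sum_lossDensity_mul_armLoss ε s A I fun b => φ (A, I, b),
    Fintype.sum_prod_type, obsDensity, mul_assoc, ← Finset.mul_sum]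

lemma stepExpect_obsDensity (hL : IsRLearner L) {s : RStrategy k n} {F : List (RObs k n) → ℝ}
    {h : List (RObs k n)} {φ : RAdviceM k n → ℝ}
    (hφ : ∀ A I, ∑ b, armLossDensity ε s A I b * F ((A, I, b) :: h) = φ A) :
    stepExpect (obsDensity ε s L) F h = ∑ A, obsAdviceDensity h A * φ A := by
  simp only [stepExpect_apply, obsDensity, Fintype.sum_prod_type, mul_assoc, ← Finset.mul_sum, hφ,
    ← Finset.sum_mul, (hL h _).2, one_mul]

end RoundDensities

section Regret

/-- Regret of one round against expert `j`. -/
noncomputable def roundRegret (j : RExpert k n) (r : RRecord k n) : ℝ :=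
  lossVal (armLoss r.2.1 r.2.2) - lossVal (armLoss r.2.1 (expertArm r.1 j))

lemma regretVs_eq_sum_map {T : ℕ} (g : Fin T → RRecord k n) (j : RExpert k n) :
    regretVs g j = ((List.ofFn g).reverse.map (roundRegret j)).sum := by
  rw [List.map_reverse, List.sum_reverse, List.map_ofFn, List.sum_ofFn]
  rfl

lemma expectR_eq_histExpect (ε : ℝ) (s : RStrategy k n) (L : RLearner k n) (T : ℕ)
    (F : List (RRecord k n) → ℝ) :
    expectR ε s L T (fun g => F (List.ofFn g).reverse)
      = histExpect (fun h => recordDensity ε s L (h.map obsOf)) T F := by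
  rw [← sum_prod_mul_eq_histExpect]
  simp only [expectR, trajProb, stratDensity, adviceDensity_eq, recordDensity, obsHist, histUpTo,
    mul_assoc]

lemma sum_lossDensity_mul_roundRegret (ε : ℝ) (s : RStrategy k n) (A : RAdviceM k n)
    (I : RArm k) (j : RExpert k n) :
    ∑ ℓ, lossDensity ε s A ℓ * roundRegret j (A, ℓ, I)
      = armLossDensity ε s A I true - armLossDensity ε s A (expertArm A j) true := by
  have expected_loss : ∀ I, ∑ ℓ, lossDensity ε s A ℓ * lossVal (armLoss ℓ I)
      = armLossDensity ε s A I true := fun I => by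
    rw [sum_lossDensity_mul_armLoss]
    simp [lossVal]
  simp only [roundRegret, mul_sub, Finset.sum_sub_distrib, expected_loss]

lemma histExpect_sum_map_le_pseudoRegret (hε : 0 ≤ ε) (hε' : ε ≤ 1 / 2) (s : RStrategy k n)
    (hL : IsRLearner L) (T : ℕ) (j : RExpert k n) {d : RArm k → ℝ}
    (hd : ∀ A I, d I ≤ armLossDensity ε s A I true - armLossDensity ε s A (expertArm A j) true) :
    histExpect (obsDensity ε s L) T (fun h => (h.map fun o => d o.2.1).sum)
      ≤ pseudoRegret ε s L T := by
  let q : List (RRecord k n) → RRecord k n → ℝ := fun h => recordDensity ε s L (h.map obsOf)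
  have hdrift : ∀ h, ∑ r, q h r * d r.2.2 ≤ ∑ r, q h r * roundRegret j r := fun h => by
    simp only [q, sum_recordDensity_mul, sum_lossDensity_mul_roundRegret, ← Finset.sum_mul,
      (lossDensity_mem_stdSimplex hε hε' s _).2, one_mul]
    gcongr with A _ I
    · exact (obsAdviceDensity_mem_stdSimplex _).1 A
    · exact (hL _ A).1 I
    · exact hd A I
  calc histExpect (obsDensity ε s L) T (fun h => (h.map fun o => d o.2.1).sum)
      = histExpect q T fun h => (h.map fun r => d r.2.2).sum := by
        rw [← histExpect_comp_map (q := q)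
          fun h => sum_recordDensity_mul_obsOf ε s L (h.map obsOf)]
        simp only [List.map_map]
        rfl
    _ ≤ histExpect q T fun h => (h.map (roundRegret j)).sum :=
        histExpect_sum_map_mono (fun h => recordDensity_mem_stdSimplex hε hε' s hL _) T hdrift
    _ = expectR ε s L T fun g => regretVs g j := by
        simp only [regretVs_eq_sum_map]
        exact (expectR_eq_histExpect ε s L T fun h => (h.map (roundRegret j)).sum).symm
    _ ≤ pseudoRegret ε s L T :=
        le_ciSup (f := fun j => expectR ε s L T fun g => regretVs g j)
          (Set.finite_range _).bddAbove j

end Regret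

section ChangeOfMeasure

/-- `1` if two bits agree and `-1` otherwise. -/
def agree (x y : Bool) : ℝ := if x = y then 1 else -1

/-- Number of pulls of batch `u` in an observed history. -/
def pulls (u : Fin k) (h : List (RObs k n)) : ℕ := h.countP fun o => armBatch o.2.1 = some u

/-- The event of at least `m` pulls of batch `u`. -/
def manyPulls (u : Fin k) (m : ℕ) : Set (List (RObs k n)) := {h | m ≤ pulls u h}

/-- Likelihood ratio of `S_(u,v)` to `S_0` of one observation given its advice and arm; it is not
`1` only when batch `u` is pulled, and then the correct arm of the batch is `xor b i`. -/
def roundRatio (ε : ℝ) (u : Fin k) (v : Fin n) : RObs k n → ℝ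
  | (_, none, _) => 1
  | (A, some (u', i), b) => if u' = u then 1 + 2 * ε * agree (xor b i) (A u v) else 1

/-- Likelihood ratio of `S_(u,v)` to `S_0`, stopped after `m` pulls of batch `u`. -/
noncomputable def stoppedRatio (ε : ℝ) (u : Fin k) (m : ℕ) (v : Fin n) :
    List (RObs k n) → ℝ :=
  likelihoodRatio (stopRatio (manyPulls u m) fun _ => roundRatio ε u v)

/-- Expected product of the factors that `stoppedRatio` gains for the experts `v₁` and `v₂` under
`S_0` when batch `u` is pulled after the history `h` at the advice vector `a`. -/
noncomputable def pullMoment (ε : ℝ) (u : Fin k) (m : ℕ) (v₁ v₂ : Fin n) (h : List (RObs k n))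
    (a : Fin n → Bool) : ℝ :=
  if m ≤ pulls u h then 1 else 1 + 4 * ε ^ 2 * agree (a v₁) (a v₂)

/-- Expected `pullMoment` at the next advice vector of batch `u`, which is already known unless
the batch has just been pulled. -/
noncomputable def pendingMoment (ε : ℝ) (u : Fin k) (m : ℕ) (v₁ v₂ : Fin n)
    (h : List (RObs k n)) : ℝ :=
  ∑ a, batchAdviceDensity u h a * pullMoment ε u m v₁ v₂ h a

lemma neg_one_le_agree (x y : Bool) : -1 ≤ agree x y := by
  unfold agree
  split_ifs <;> norm_num

lemma sum_agree_of_ne {v v' : Fin n} (hv : v ≠ v') :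
    ∑ a : Fin n → Bool, agree (a v) (a v') = 0 := by
  have hinv : Function.Involutive fun a : Fin n → Bool => Function.update a v (!a v) := by
    intro a
    simp
  have flip : ∀ a, agree (hinv.toPerm _ a v) (hinv.toPerm _ a v') = -agree (a v) (a v') :=
    fun a => by
      simp only [Function.Involutive.coe_toPerm, agree, Function.update_self,
        Function.update_of_ne hv.symm]
      cases a v <;> cases a v' <;> simp
  have := Equiv.sum_comp (hinv.toPerm _) fun a => agree (a v) (a v')
  simp only [flip, Finset.sum_neg_distrib] at this
  linarith

lemma pulls_cons (u : Fin k) (o : RObs k n) (h : List (RObs k n)) :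
    pulls u (o :: h) = pulls u h + if armBatch o.2.1 = some u then 1 else 0 := by
  simp [pulls, List.countP_cons]

lemma cons_mem_manyPulls {u : Fin k} {m : ℕ} (h : List (RObs k n)) (o : RObs k n)
    (hh : h ∈ manyPulls u m) : o :: h ∈ manyPulls u m :=
  hh.trans ((pulls_cons u o h).symm ▸ Nat.le_add_right _ _)

lemma roundRatio_of_ne {u : Fin k} {A : RAdviceM k n} {I : RArm k} (hI : armBatch I ≠ some u)
    (v : Fin n) (b : Bool) : roundRatio ε u v (A, I, b) = 1 := by
  rcases I with _ | ⟨u', i⟩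
  · rfl
  · have : u' ≠ u := by simpa [armBatch] using hI
    simp [roundRatio, this]

lemma roundRatio_nonneg (hε : 0 ≤ ε) (hε' : ε ≤ 1 / 2) (u : Fin k) (v : Fin n) (o : RObs k n) :
    0 ≤ roundRatio ε u v o := by
  rcases o with ⟨A, _ | ⟨u', i⟩, b⟩ <;> simp only [roundRatio]
  · exact zero_le_one
  · have := neg_one_le_agree (xor b i) (A u v)
    split_ifs
    · nlinarith
    · exact zero_le_one

lemma armLossDensity_some (ε : ℝ) (u : Fin k) (v : Fin n) (A : RAdviceM k n) (I : RArm k)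
    (b : Bool) : armLossDensity ε (some (u, v)) A I b =
      armLossDensity ε none A I b * roundRatio ε u v (A, I, b) := by
  rcases I with _ | ⟨u', i⟩
  · simp [armLossDensity, roundRatio]
  · by_cases hu : u' = u
    · subst hu
      simp only [armLossDensity, correctArmDensity, roundRatio, batchFactor, agree, if_true]
      split_ifs <;> ring
    · simp [armLossDensity, correctArmDensity, roundRatio, batchFactor, hu]

lemma obsDensity_some (ε : ℝ) (u : Fin k) (v : Fin n) (L : RLearner k n) :
    obsDensity ε (some (u, v)) L = obsDensity ε none L * fun _ => roundRatio ε u v := by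
  funext h o
  simp only [obsDensity, armLossDensity_some, Pi.mul_apply, mul_assoc]

lemma histExpect_stoppedRatio_mul_indicator (ε : ℝ) (u : Fin k) (m : ℕ) (v : Fin n)
    (hL : IsRLearner L) (T : ℕ) :
    histExpect (obsDensity ε none L) T (stoppedRatio ε u m v * (manyPulls u m).indicator 1)
      = histProb (obsDensity ε (some (u, v)) L) T (manyPulls u m) := by
  have hsum := obsDensity_some ε u v L ▸ sum_obsDensity ε (some (u, v)) hL
  rw [obsDensity_some,
    ← histProb_mul_stopRatio (sum_obsDensity ε none hL) hsum cons_mem_manyPulls, histProb,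
    histExpect_mul, stoppedRatio]

lemma stoppedRatio_nonneg (hε : 0 ≤ ε) (hε' : ε ≤ 1 / 2) (u : Fin k) (m : ℕ) (v : Fin n)
    (h : List (RObs k n)) : 0 ≤ stoppedRatio ε u m v h := by
  refine likelihoodRatio_nonneg (fun h o => ?_) h
  unfold stopRatio
  split_ifs
  · exact zero_le_one
  · exact roundRatio_nonneg hε hε' u v o

lemma sum_armLossDensity_mul_roundRatio_mul (ε : ℝ) (u : Fin k) (v v' : Fin n)
    (A : RAdviceM k n) (I : RArm k) :
    ∑ b, armLossDensity ε none A I b * (roundRatio ε u v (A, I, b) * roundRatio ε u v' (A, I, b))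
      = if armBatch I = some u then 1 + 4 * ε ^ 2 * agree (A u v) (A u v') else 1 := by
  split_ifs with hI
  · rcases I with _ | ⟨u', i⟩
    · simp [armBatch] at hI
    · obtain rfl : u' = u := by simpa [armBatch] using hI
      simp only [armLossDensity, correctArmDensity, roundRatio, batchFactor, if_true, agree,
        Fintype.sum_bool]
      cases i <;> cases A u' v <;> cases A u' v' <;> simp <;> ring
  · simp only [roundRatio_of_ne hI, mul_one, sum_armLossDensity]

lemma sum_armLossDensity_mul_stoppedRatio_mul (ε : ℝ) (u : Fin k) (m : ℕ) (v v' : Fin n)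
    (A : RAdviceM k n) (I : RArm k) (h : List (RObs k n)) :
    ∑ b, armLossDensity ε none A I b *
        (stoppedRatio ε u m v ((A, I, b) :: h) * stoppedRatio ε u m v' ((A, I, b) :: h))
      = stoppedRatio ε u m v h * stoppedRatio ε u m v' h *
        if armBatch I = some u then pullMoment ε u m v v' h (A u) else 1 := by
  simp only [stoppedRatio, likelihoodRatio]
  set Λ := likelihoodRatio (stopRatio (manyPulls u m) fun _ => roundRatio ε u v) h
  set Λ' := likelihoodRatio (stopRatio (manyPulls u m) fun _ => roundRatio ε u v') h
  by_cases hh : m ≤ pulls u h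
  · have : h ∈ manyPulls u m := hh
    simp only [stopRatio, this, pullMoment, hh, if_true, one_mul, ite_self, mul_one,
      ← Finset.sum_mul, sum_armLossDensity]
  · have : h ∉ manyPulls u m := hh
    simp only [stopRatio, this, pullMoment, hh, if_false, mul_mul_mul_comm _ Λ]
    rw [← sum_armLossDensity_mul_roundRatio_mul ε u v v', Finset.mul_sum]
    exact Finset.sum_congr rfl fun b _ => by ring

lemma histExpect_stoppedRatio_mul_mul (hL : IsRLearner L) {u : Fin k} {m : ℕ} {v v' : Fin n}
    (T : ℕ) {W : List (RObs k n) → ℝ} {φ : List (RObs k n) → (Fin n → Bool) → ℝ}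
    (hW : ∀ h, W h = ∑ a, batchAdviceDensity u h a * φ h a)
    (hWb : ∀ h A I b b', W ((A, I, b) :: h) = W ((A, I, b') :: h))
    (hφ : ∀ h A I b, (if armBatch I = some u then pullMoment ε u m v v' h (A u) else 1) *
      W ((A, I, b) :: h) = φ h (A u)) :
    histExpect (obsDensity ε none L) T (stoppedRatio ε u m v * stoppedRatio ε u m v' * W)
      = W [] := by
  have harmonic : stepExpect (obsDensity ε none L)
      (stoppedRatio ε u m v * stoppedRatio ε u m v' * W)
        = stoppedRatio ε u m v * stoppedRatio ε u m v' * W := by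
    funext h
    rw [stepExpect_obsDensity hL
      (φ := fun A => stoppedRatio ε u m v h * stoppedRatio ε u m v' h * φ h (A u))]
    · simp only [Pi.mul_apply, hW h, mul_left_comm (obsAdviceDensity _ _), ← Finset.mul_sum]
      congr 1
      exact sum_prod_mul_eval (fun u => (batchAdviceDensity_mem_stdSimplex u h).2) u (φ h)
    · intro A I
      rw [← hφ h A I true, ← mul_assoc, ← sum_armLossDensity_mul_stoppedRatio_mul,
        Finset.sum_mul]
      simp only [Pi.mul_apply, mul_assoc, hWb h A I _ true]
  rw [histExpect_eq_of_stepExpect_eq harmonic]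
  simp [stoppedRatio, likelihoodRatio]

lemma histExpect_stoppedRatio_mul_self_le (hε : 0 ≤ ε) (hε' : ε ≤ 1 / 2) (hL : IsRLearner L)
    (u : Fin k) (m : ℕ) (v : Fin n) (T : ℕ) :
    histExpect (obsDensity ε none L) T (stoppedRatio ε u m v * stoppedRatio ε u m v)
      ≤ (1 + 4 * ε ^ 2) ^ m := by
  let W : List (RObs k n) → ℝ := fun h => (1 + 4 * ε ^ 2) ^ (m - pulls u h)
  have hW : histExpect (obsDensity ε none L) T (stoppedRatio ε u m v * stoppedRatio ε u m v * W)
      = W [] := by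
    refine histExpect_stoppedRatio_mul_mul hL T (φ := fun h _ => W h)
      (fun h => ?_) (fun _ _ _ _ _ => rfl) fun h A I b => ?_
    · rw [← Finset.sum_mul, (batchAdviceDensity_mem_stdSimplex u h).2, one_mul]
    · simp only [W, pulls_cons, pullMoment, agree, if_true, mul_one]
      split_ifs with hI hm
      · rw [Nat.sub_eq_zero_of_le hm, Nat.sub_eq_zero_of_le (by omega), pow_zero, one_mul]
      · rw [← pow_succ', show m - pulls u h = m - (pulls u h + 1) + 1 by omega]
      · rw [add_zero, one_mul]
  calc _ ≤ histExpect (obsDensity ε none L) T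
        (stoppedRatio ε u m v * stoppedRatio ε u m v * W) :=
        histExpect_mono (fun h => (obsDensity_mem_stdSimplex hε hε' none hL h).1) fun h _ =>
          le_mul_of_one_le_right (mul_self_nonneg _) (one_le_pow₀ (by nlinarith [sq_nonneg ε]))
    _ = (1 + 4 * ε ^ 2) ^ m := by rw [hW]; rfl

lemma sum_uniform_mul_pullMoment (ε : ℝ) (u : Fin k) (m : ℕ) {v v' : Fin n} (hv : v ≠ v')
    (h : List (RObs k n)) : ∑ a, (1 / 2) ^ n * pullMoment ε u m v v' h a = 1 := by
  have uniform : ∑ _a : Fin n → Bool, (1 / 2 : ℝ) ^ n = 1 :=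
    (batchAdviceDensity_mem_stdSimplex u []).2
  unfold pullMoment
  split_ifs
  · simpa only [mul_one] using uniform
  · simp only [mul_add, mul_one, Finset.sum_add_distrib, uniform, ← Finset.mul_sum,
      sum_agree_of_ne hv, mul_zero, add_zero]

lemma pendingMoment_nil (ε : ℝ) (u : Fin k) (m : ℕ) {v v' : Fin n} (hv : v ≠ v') :
    pendingMoment ε u m v v' [] = 1 :=
  sum_uniform_mul_pullMoment ε u m hv []

lemma pullMoment_mul_pendingMoment_cons (ε : ℝ) (u : Fin k) (m : ℕ) {v v' : Fin n}
    (hv : v ≠ v') (h : List (RObs k n)) (A : RAdviceM k n) (I : RArm k) (b : Bool) :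
    (if armBatch I = some u then pullMoment ε u m v v' h (A u) else 1) *
      pendingMoment ε u m v v' ((A, I, b) :: h) = pullMoment ε u m v v' h (A u) := by
  by_cases hI : armBatch I = some u
  · simp only [pendingMoment, batchAdviceDensity, hI, if_true, sum_uniform_mul_pullMoment ε u m hv,
      mul_one]
  · simp only [pendingMoment, batchAdviceDensity, hI, if_false, pullMoment, pulls_cons, add_zero,
      one_mul, ite_mul, zero_mul, Fintype.sum_ite_eq']

lemma le_pendingMoment (ε : ℝ) (u : Fin k) (m : ℕ) (v v' : Fin n) (h : List (RObs k n)) :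
    1 - 4 * ε ^ 2 ≤ pendingMoment ε u m v v' h := by
  have hbatch := batchAdviceDensity_mem_stdSimplex u h
  have le_pullMoment : ∀ a, 1 - 4 * ε ^ 2 ≤ pullMoment ε u m v v' h a := fun a => by
    unfold pullMoment
    split_ifs
    · nlinarith [sq_nonneg ε]
    · nlinarith [sq_nonneg ε, neg_one_le_agree (a v) (a v')]
  calc 1 - 4 * ε ^ 2 = ∑ a, batchAdviceDensity u h a * (1 - 4 * ε ^ 2) := by
        rw [← Finset.sum_mul, hbatch.2, one_mul]
    _ ≤ pendingMoment ε u m v v' h :=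
        Finset.sum_le_sum fun a _ => mul_le_mul_of_nonneg_left (le_pullMoment a) (hbatch.1 a)

lemma histExpect_stoppedRatio_mul_le (hε : 0 ≤ ε) (hε' : ε < 1 / 2) (hL : IsRLearner L)
    (u : Fin k) (m : ℕ) {v v' : Fin n} (hv : v ≠ v') (T : ℕ) :
    histExpect (obsDensity ε none L) T (stoppedRatio ε u m v * stoppedRatio ε u m v')
      ≤ (1 - 4 * ε ^ 2)⁻¹ := by
  have hpos : 0 < 1 - 4 * ε ^ 2 := by nlinarith
  have hW : histExpect (obsDensity ε none L) T
      (stoppedRatio ε u m v * stoppedRatio ε u m v' * pendingMoment ε u m v v') = 1 :=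
    (histExpect_stoppedRatio_mul_mul hL T (W := pendingMoment ε u m v v') (fun _ => rfl)
      (fun _ _ _ _ _ => rfl) (pullMoment_mul_pendingMoment_cons ε u m hv)).trans
        (pendingMoment_nil ε u m hv)
  rw [inv_eq_one_div, le_div_iff₀' hpos, ← smul_eq_mul, ← map_smul]
  refine le_of_le_of_eq (histExpect_mono (fun h => (obsDensity_mem_stdSimplex hε hε'.le none hL
    h).1) fun h _ => ?_) hW
  have hΛ := stoppedRatio_nonneg hε hε'.le u m v h
  have hΛ' := stoppedRatio_nonneg hε hε'.le u m v' h
  rw [Pi.smul_apply, smul_eq_mul, mul_comm]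
  exact mul_le_mul_of_nonneg_left (le_pendingMoment ε u m v v' h) (mul_nonneg hΛ hΛ')

lemma sum_histProb_manyPulls_le (hε : 0 ≤ ε) (hε' : ε < 1 / 2) (hL : IsRLearner L) (hn : 0 < n)
    (u : Fin k) (m T : ℕ) :
    ∑ v, histProb (obsDensity ε (some (u, v)) L) T (manyPulls u m)
      ≤ n * histProb (obsDensity ε none L) T (manyPulls u m)
        + ((1 + 4 * ε ^ 2) ^ m + n * (1 - 4 * ε ^ 2)⁻¹) / 4 := by
  have : NeZero n := ⟨hn.ne'⟩
  have hinv : 0 ≤ (1 - 4 * ε ^ 2)⁻¹ := inv_nonneg.2 (by nlinarith)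
  have moment : ∀ v v', histExpect (obsDensity ε none L) T
      (stoppedRatio ε u m v * stoppedRatio ε u m v')
        ≤ (if v = v' then (1 + 4 * ε ^ 2) ^ m else 0) + (1 - 4 * ε ^ 2)⁻¹ := fun v v' => by
    split_ifs with hv
    · subst hv
      exact le_add_of_le_of_nonneg (histExpect_stoppedRatio_mul_self_le hε hε'.le hL u m v T) hinv
    · rw [zero_add]
      exact histExpect_stoppedRatio_mul_le hε hε' hL u m hv T
  have second_moment : ∑ v, ∑ v', histExpect (obsDensity ε none L) T
      (stoppedRatio ε u m v * stoppedRatio ε u m v')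
        ≤ n * ((1 + 4 * ε ^ 2) ^ m + n * (1 - 4 * ε ^ 2)⁻¹) := by
    refine (Finset.sum_le_sum fun v _ => Finset.sum_le_sum fun v' _ => moment v v').trans_eq ?_
    simp [Finset.sum_add_distrib, mul_add]
  simp only [← histExpect_stoppedRatio_mul_indicator ε u m _ hL]
  refine (sum_histExpect_mul_indicator_le (fun h => (obsDensity_mem_stdSimplex hε hε'.le none hL
    h).1) T _ _).trans ?_
  rw [Fintype.card_fin]
  gcongr
  refine (mul_le_mul_of_nonneg_left second_moment (by positivity)).trans_eq ?_
  field_simp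

end ChangeOfMeasure

section LowerBound

lemma sum_map_sum_ite_armBatch (h : List (RObs k n)) (c : ℝ) :
    (h.map fun o => ∑ u, if armBatch o.2.1 = some u then c else 0).sum
      = c * ∑ u, (pulls u h : ℝ) := by
  induction h with
  | nil => simp [pulls]
  | cons o h ih =>
    simp only [List.map_cons, List.sum_cons, ih, pulls_cons, Nat.cast_add, Finset.sum_add_distrib,
      Nat.cast_ite, Nat.cast_one, Nat.cast_zero, mul_add, Finset.mul_sum, mul_ite, mul_one,
      mul_zero, add_comm]

lemma sum_map_ite_armBatch (u : Fin k) (h : List (RObs k n)) (c : ℝ) :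
    (h.map fun o => if armBatch o.2.1 = some u then 0 else c).sum
      = c * (h.length - pulls u h) := by
  induction h with
  | nil => simp [pulls]
  | cons o h ih =>
    rw [List.map_cons, List.sum_cons, ih, pulls_cons, List.length_cons]
    split_ifs <;> push_cast <;> ring

lemma mul_sum_histExpect_pulls_le_pseudoRegret (hε : 0 ≤ ε) (hε' : ε ≤ 1 / 2)
    (hL : IsRLearner L) (T : ℕ) :
    ε / 2 * ∑ u, histExpect (obsDensity ε none L) T (fun h => (pulls u h : ℝ))
      ≤ pseudoRegret ε none L T := by
  refine le_of_eq_of_le ?_ (histExpect_sum_map_le_pseudoRegret hε hε' none hL T none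
    (d := fun I => ∑ u, if armBatch I = some u then ε / 2 else 0) fun A I => ?_)
  · rw [← map_sum, ← smul_eq_mul, ← map_smul]
    congr 1
    funext h
    simp only [sum_map_sum_ite_armBatch, Pi.smul_apply, Finset.sum_apply, smul_eq_mul]
  · rcases I with _ | ⟨u, i⟩
    · simp [armBatch, expertArm]
    · simp [armBatch, expertArm, armLossDensity, correctArmDensity, batchFactor]

lemma mul_sum_histProb_manyPulls_le_pseudoRegret (hε : 0 ≤ ε) (hε' : ε ≤ 1 / 2)
    (hL : IsRLearner L) (T : ℕ) (x : ℝ) :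
    ε / 2 * (x * ∑ u, histProb (obsDensity ε none L) T (manyPulls u ⌈x⌉₊))
      ≤ pseudoRegret ε none L T := by
  refine le_trans ?_ (mul_sum_histExpect_pulls_le_pseudoRegret hε hε' hL T)
  rw [Finset.mul_sum]
  gcongr with u
  have := mul_histProb_le_histExpect
    (fun h => (obsDensity_mem_stdSimplex hε hε' none hL h).1) T
    (X := fun h => (pulls u h : ℝ)) (fun h => Nat.cast_nonneg _) x
  simpa only [manyPulls, Nat.ceil_le] using this

lemma mul_one_sub_histProb_manyPulls_le_pseudoRegret (hε : 0 ≤ ε) (hε' : ε ≤ 1 / 2)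
    (hL : IsRLearner L) (u : Fin k) (v : Fin n) {m T : ℕ} (hm : (m : ℝ) ≤ T / 2 + 1) :
    ε * T / 4 * (1 - histProb (obsDensity ε (some (u, v)) L) T (manyPulls u m))
      ≤ pseudoRegret ε (some (u, v)) L T := by
  refine le_trans ?_ (histExpect_sum_map_le_pseudoRegret hε hε' (some (u, v)) hL T (some (u, v))
    (d := fun I => if armBatch I = some u then 0 else ε / 2) fun A I => ?_)
  · rw [← histProb_compl (sum_obsDensity ε _ hL), histProb, ← smul_eq_mul, ← map_smul]
    refine histExpect_mono (fun h => (obsDensity_mem_stdSimplex hε hε' _ hL h).1) fun h hh => ?_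
    have pulls_le : (pulls u h : ℝ) ≤ T := by exact_mod_cast hh ▸ List.countP_le_length
    rw [sum_map_ite_armBatch, hh, Pi.smul_apply, smul_eq_mul]
    by_cases hp : h ∈ manyPulls u m
    · rw [Set.indicator_of_notMem (Set.notMem_compl_iff.2 hp), mul_zero]
      exact mul_nonneg (by positivity) (sub_nonneg.2 pulls_le)
    · have : (pulls u h : ℝ) + 1 ≤ m := by
        exact_mod_cast (not_le.1 hp : pulls u h < m)
      rw [Set.indicator_of_mem hp, Pi.one_apply]
      nlinarith
  · have advised : armLossDensity ε (some (u, v)) A (expertArm A (some (u, v))) true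
        = 1 / 2 - ε := by
      simp [expertArm, armLossDensity, correctArmDensity, batchFactor]
    rw [advised]
    rcases I with _ | ⟨u', i⟩
    · simp only [armBatch, armLossDensity, Option.map_none, reduceCtorEq, if_false, if_true]
      linarith
    · simp only [armBatch, armLossDensity, correctArmDensity, batchFactor, Option.map_some,
        Option.some.injEq]
      split_ifs <;> linarith

lemma mul_one_sub_histProb_none_le (hε : 0 ≤ ε) (hε' : ε < 1 / 2) (hL : IsRLearner L)
    (hn : 0 < n) (u : Fin k) {m T : ℕ} (hm : (m : ℝ) ≤ T / 2 + 1) {R : ℝ}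
    (hR : ∀ v, pseudoRegret ε (some (u, v)) L T ≤ R) :
    ε * T / 4 * (1 - histProb (obsDensity ε none L) T (manyPulls u m)
      - ((1 + 4 * ε ^ 2) ^ m / n + (1 - 4 * ε ^ 2)⁻¹) / 4) ≤ R := by
  have hn' : (0 : ℝ) < n := by exact_mod_cast hn
  have sum_le : ε * T / 4 * (n - ∑ v, histProb (obsDensity ε (some (u, v)) L) T (manyPulls u m))
      ≤ n * R := by
    have := Finset.sum_le_sum fun v (_ : v ∈ Finset.univ) =>
      (mul_one_sub_histProb_manyPulls_le_pseudoRegret hε hε'.le hL u v hm).trans (hR v)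
    simpa [← Finset.mul_sum] using this
  refine le_of_mul_le_mul_left (le_trans ?_ sum_le) hn'
  rw [mul_left_comm]
  gcongr
  refine le_of_eq_of_le ?_ (sub_le_sub_left (sum_histProb_manyPulls_le hε hε' hL hn u m T) _)
  field_simp
  ring

theorem exists_le_pseudoRegret (hε : 0 ≤ ε) (hε' : ε < 1 / 2) (hk : 0 < k) (hn : 0 < n)
    (hL : IsRLearner L) (T : ℕ) :
    ∃ s : RStrategy k n, ε * T / 8 *
      (1 - ((1 + 4 * ε ^ 2) ^ ⌈(T : ℝ) / (2 * k)⌉₊ / n + (1 - 4 * ε ^ 2)⁻¹) / 4)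
        ≤ pseudoRegret ε s L T := by
  obtain ⟨s, hs⟩ := Finite.exists_max fun s : RStrategy k n => pseudoRegret ε s L T
  refine ⟨s, ?_⟩
  set R := pseudoRegret ε s L T
  set m := ⌈(T : ℝ) / (2 * k)⌉₊
  set M := (1 + 4 * ε ^ 2) ^ m
  set c := (1 - 4 * ε ^ 2)⁻¹
  set p : Fin k → ℝ := fun u => histProb (obsDensity ε none L) T (manyPulls u m)
  have hk' : (1 : ℝ) ≤ k := by exact_mod_cast hk
  have hm : (m : ℝ) ≤ T / 2 + 1 := by
    refine (Nat.ceil_lt_add_one (by positivity)).le.trans ?_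
    gcongr
    linarith
  have exploration : ε * T / 4 * ∑ u, p u ≤ k * R := by
    have : ε / 2 * (T / (2 * k) * ∑ u, p u) ≤ R :=
      (mul_sum_histProb_manyPulls_le_pseudoRegret hε hε'.le hL T (T / (2 * k))).trans (hs none)
    refine le_of_eq_of_le ?_ (mul_le_mul_of_nonneg_left this (Nat.cast_nonneg k))
    generalize ∑ u, p u = P
    field_simp
    ring
  have exploitation : ∀ u, ε * T / 4 * (1 - p u - (M / n + c) / 4) ≤ R := fun u =>
    mul_one_sub_histProb_none_le hε hε' hL hn u hm fun v => hs (some (u, v))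
  have sum_exploitation := Finset.sum_le_sum fun u (_ : u ∈ Finset.univ) => exploitation u
  simp only [← Finset.mul_sum, Finset.sum_sub_distrib, Finset.sum_const, Finset.card_univ,
    Fintype.card_fin, nsmul_eq_mul, mul_one] at sum_exploitation
  refine le_of_mul_le_mul_left ?_ (zero_lt_one.trans_le hk')
  linarith

end LowerBound

section Numerics

lemma inv_eleven_le_log (hn : 10 < n) : 1 / 11 ≤ Real.log ((n : ℝ) / 10) := by
  have hn' : (11 : ℝ) ≤ n := by exact_mod_cast hn
  calc (1 / 11 : ℝ) = 1 - (11 / 10)⁻¹ := by norm_num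
    _ ≤ 1 - ((n : ℝ) / 10)⁻¹ := by gcongr
    _ ≤ Real.log ((n : ℝ) / 10) := Real.one_sub_inv_le_log_of_pos (by positivity)

lemma natCeil_div_two_mul_le {x : ℝ} (hk : 0 < k) (hx : k ≤ 11 * x) :
    (⌈x / (2 * k)⌉₊ : ℝ) ≤ 25 * x / k := by
  have hk' : (0 : ℝ) < k := by exact_mod_cast hk
  have hx' : 1 ≤ 11 * (x / k) := by rwa [← mul_div_assoc, one_le_div hk']
  have half : x / (2 * k) = x / k / 2 := by rw [div_div, mul_comm]
  rw [half, mul_div_assoc]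
  linarith [Nat.ceil_lt_add_one (show 0 ≤ x / k / 2 by linarith)]

lemma one_add_pow_natCeil_le_exp {ℓ x : ℝ} (hk : 0 < k) (hx : k ≤ 11 * x)
    (hε : ε ^ 2 = k * ℓ / (100 * x)) :
    (1 + 4 * ε ^ 2) ^ ⌈x / (2 * k)⌉₊ ≤ Real.exp ℓ := by
  have hk' : (0 : ℝ) < k := by exact_mod_cast hk
  have hx' : 0 < x := by linarith
  calc (1 + 4 * ε ^ 2) ^ ⌈x / (2 * k)⌉₊
      ≤ Real.exp (4 * ε ^ 2) ^ ⌈x / (2 * k)⌉₊ := by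
        gcongr
        linarith [Real.add_one_le_exp (4 * ε ^ 2)]
    _ = Real.exp (⌈x / (2 * k)⌉₊ * (4 * ε ^ 2)) := (Real.exp_nat_mul _ _).symm
    _ ≤ Real.exp (25 * x / k * (4 * ε ^ 2)) := by
        gcongr
        exact natCeil_div_two_mul_le hk hx
    _ = Real.exp ℓ := by
        rw [hε]
        congr 1
        field_simp
        ring

lemma sqrt_mul_eq_mul_sqrt_div {x y : ℝ} (hx : 0 < x) :
    √(x * y) = 10 * x * √(y / (100 * x)) := by
  rw [show x * y = (10 * x) ^ 2 * (y / (100 * x)) by field_simp; norm_num,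
    Real.sqrt_mul (by positivity), Real.sqrt_sq (by positivity)]

end Numerics

end ReducedBwE

/-- in the reduced setting with `k ≥ 1`, `n > 10`, `T ≥ k·ln(n/10)` and
`ε = √(k·ln(n/10)/(100T))`, every learner suffers pseudo-regret greater than
`√(T·k·ln(n/10))/100000` against some strategy in the pool. -/
theorem stmt1 (k n T : ℕ) (hk : 1 ≤ k) (hn : 10 < n)
    (hT : (k : ℝ) * Real.log ((n : ℝ) / 10) ≤ (T : ℝ))
    (L : RLearner k n) (hL : IsRLearner L) :
    ∃ s : RStrategy k n,
      Real.sqrt ((T : ℝ) * (k : ℝ) * Real.log ((n : ℝ) / 10)) / 100000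
        < pseudoRegret (Real.sqrt ((k : ℝ) * Real.log ((n : ℝ) / 10) / (100 * (T : ℝ))))
            s L T := by
  have hlog := ReducedBwE.inv_eleven_le_log hn
  have hk' : (1 : ℝ) ≤ k := by exact_mod_cast hk
  have hn' : (0 : ℝ) < n := by positivity
  set ℓ := Real.log ((n : ℝ) / 10)
  have hT' : (0 : ℝ) < T := lt_of_lt_of_le (by positivity) hT
  set ε := Real.sqrt ((k : ℝ) * ℓ / (100 * (T : ℝ)))
  have hε : 0 < ε := Real.sqrt_pos.2 (by positivity)
  have hε_sq : ε ^ 2 = k * ℓ / (100 * T) := Real.sq_sqrt (by positivity)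
  have hε_sq_le : ε ^ 2 ≤ 1 / 100 := by
    rw [hε_sq, div_le_div_iff₀ (by positivity) (by norm_num)]
    linarith
  have hpow : (1 + 4 * ε ^ 2) ^ ⌈(T : ℝ) / (2 * k)⌉₊ / n ≤ 1 / 10 := by
    rw [div_le_iff₀ hn', one_div_mul_eq_div, ← Real.exp_log (by positivity : 0 < (n : ℝ) / 10)]
    exact ReducedBwE.one_add_pow_natCeil_le_exp (by omega) (by nlinarith) hε_sq
  have hinv : (1 - 4 * ε ^ 2)⁻¹ ≤ 25 / 24 := by
    rw [inv_le_comm₀] <;> linarith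
  obtain ⟨s, hs⟩ := ReducedBwE.exists_le_pseudoRegret hε.le
    (by nlinarith : ε < 1 / 2) hk (by omega) hL T
  refine ⟨s, lt_of_lt_of_le ?_ hs⟩
  rw [mul_assoc, ReducedBwE.sqrt_mul_eq_mul_sqrt_div hT']
  nlinarith [mul_pos hε hT']
end

section
/- In the reduced BwE setting with parameters k ≥ 1, n ≥ 10, and 0 < ε ≤ 0.1, every good SBI algorithm A' satisfies T(A', S_0) ≥ k·ln(n/10) / (20ε²). -/
open scoped BigOperators ENNReal

/-! ## Special Batch Identification (SBI) algorithms -/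

/-- An SBI algorithm: at the start of each round, given its observed history
(most recent first), it randomly either halts and outputs a batch in
`{0} ∪ [k]` (`decide h (some b)`), or continues (`decide h none`); if it continues,
it receives the round's advice and pulls an arm according to the density `pull`. -/
structure RSBI (k n : ℕ) where
  decide : List (RObs k n) → Option (Option (Fin k)) → ℝ
  pull : List (RObs k n) → RAdviceM k n → RArm k → ℝ

/-- The decision and pulling densities are probability distributions. -/
def IsRSBI {k n : ℕ} (B : RSBI k n) : Prop :=
  (∀ h, (∀ d, 0 ≤ B.decide h d) ∧ ∑ d : Option (Option (Fin k)), B.decide h d = 1) ∧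
  (∀ h A, (∀ i, 0 ≤ B.pull h A i) ∧ ∑ i : RArm k, B.pull h A i = 1)

/-- The full observed history of a completed `t`-round trajectory, most recent first. -/
def fullObsHist {k n t : ℕ} (g : Fin t → RRecord k n) : List (RObs k n) :=
  (List.ofFn g).reverse.map obsOf

/-- Probability that the SBI algorithm completes (at least) `t` rounds, realizing the
trajectory `g`: at each of these rounds it decides to continue, the adversary plays
strategy `s`, and the algorithm pulls the recorded arm. -/
noncomputable def runProb {k n : ℕ} (ε : ℝ) (s : RStrategy k n) (B : RSBI k n) (t : ℕ)
    (g : Fin t → RRecord k n) : ℝ :=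
  ∏ i : Fin t,
    B.decide (obsHist g i) none *
      (stratDensity ε s (histUpTo g i) (g i).1 (g i).2.1 *
        B.pull (obsHist g i) (g i).1 (g i).2.2)

/-- Probability that the SBI algorithm halts after exactly `t` rounds with output `b`. -/
noncomputable def haltProb {k n : ℕ} (ε : ℝ) (s : RStrategy k n) (B : RSBI k n) (t : ℕ)
    (b : Option (Fin k)) : ℝ :=
  ∑ g : Fin t → RRecord k n, runProb ε s B t g * B.decide (fullObsHist g) (some b)

/-- Probability that the SBI algorithm (eventually) halts with output `b`. -/
noncomputable def outProb {k n : ℕ} (ε : ℝ) (s : RStrategy k n) (B : RSBI k n)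
    (b : Option (Fin k)) : ℝ≥0∞ :=
  ∑' t : ℕ, ENNReal.ofReal (haltProb ε s B t b)

/-- Probability that the SBI algorithm runs for at least `t` rounds. -/
noncomputable def surviveProb {k n : ℕ} (ε : ℝ) (s : RStrategy k n) (B : RSBI k n)
    (t : ℕ) : ℝ :=
  ∑ g : Fin t → RRecord k n, runProb ε s B t g

/-- `T(A', S)`: the expected number of rounds the SBI algorithm runs before halting,
via the layer-cake formula `E[T] = Σ_{t ≥ 1} Pr[T ≥ t]` (it is `∞` if the algorithm
may run forever with positive probability). -/
noncomputable def expRounds {k n : ℕ} (ε : ℝ) (s : RStrategy k n) (B : RSBI k n) : ℝ≥0∞ :=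
  ∑' t : ℕ, ENNReal.ofReal (surviveProb ε s B (t + 1))

/-- An SBI algorithm is good if, under every strategy of the pool, it outputs the
special batch of that strategy with probability at least `0.95`. -/
def GoodSBI {k n : ℕ} (ε : ℝ) (B : RSBI k n) : Prop :=
  ∀ s : RStrategy k n, ENNReal.ofReal 0.95 ≤ outProb ε s B (specialBatch s)

/-!
Under `S_0`, let `L` be the likelihood ratio of batch `u` being special, averaged over its `n`
experts `v`. The likelihood ratio of `S_(u,v)` changes only when batch `u` is pulled, by a factor
`1 ± 2ε`, and each pull comes with fresh random signs, so distinct experts stay almost uncorrelated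
and `(L - 1)²` is of order `1/n` until the ratios of single experts have grown. Quantitatively,
`(L - 1)² / (1 + 4ε²)^(2N)`, with `N` the number of pulls of batch `u`, is dominated by a
supermartingale started at no more than `1/n`. Hence `L` is close to `1` unless `N` is at least of
order `log n / ε²`. If the algorithm is good, then by change of measure the expectation of `L` on
the event that it outputs `0` is the average probability of a wrong output under the `S_(u,v)`, at
most `0.05`; but the algorithm outputs `0` with probability at least `0.95`. So every batch
separately needs `log (n/10) / (20ε²)` expected pulls, and these add up over the `k` batches.
-/

namespace BwE

lemma sum_pi_prod_mul_eval {ι R : Type*} {κ : ι → Type*} [Fintype ι] [DecidableEq ι]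
    [∀ i, Fintype (κ i)] [CommSemiring R] (p : ∀ i, κ i → R) (hp : ∀ i, ∑ a, p i a = 1) (j : ι)
    (G : κ j → R) : ∑ x : ∀ i, κ i, (∏ i, p i (x i)) * G (x j) = ∑ a, p j a * G a := by
  let q : ∀ i, κ i → R := Function.update p j fun a => p j a * G a
  have hq_of_ne : ∀ i ∈ Finset.univ.erase j, q i = p i := fun i hi =>
    Function.update_of_ne (Finset.ne_of_mem_erase hi) _ _
  have hq_self : ∀ a, q j a = p j a * G a := fun a => by simp [q]
  have hprod : ∀ x : ∀ i, κ i, (∏ i, p i (x i)) * G (x j) = ∏ i, q i (x i) := fun x => by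
    rw [← Finset.mul_prod_erase _ _ (Finset.mem_univ j),
      ← Finset.mul_prod_erase _ (fun i => q i (x i)) (Finset.mem_univ j), hq_self,
      Finset.prod_congr rfl fun i hi => congrFun (hq_of_ne i hi) (x i)]
    ring
  simp only [hprod, ← Fintype.prod_sum]
  rw [← Finset.mul_prod_erase _ _ (Finset.mem_univ j),
    Finset.prod_eq_one fun i hi => by rw [hq_of_ne i hi, hp], mul_one]
  simp only [hq_self]

lemma sum_pi_prod_eq_one {ι R : Type*} {κ : ι → Type*} [Fintype ι] [DecidableEq ι]
    [∀ i, Fintype (κ i)] [CommSemiring R] (p : ∀ i, κ i → R) (hp : ∀ i, ∑ a, p i a = 1) :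
    ∑ x : ∀ i, κ i, ∏ i, p i (x i) = 1 := by
  rw [← Fintype.prod_sum, Finset.prod_eq_one fun i _ => hp i]

/-! ### Random signs and the tilted second moment -/

section Signs

variable {ι : Type*} [Fintype ι]

/-- The sign `±1` of a bit, used to write advice vectors as Rademacher vectors. -/
noncomputable def boolSign (b : Bool) : ℝ := if b then 1 else -1

lemma boolSign_sq (b : Bool) : boolSign b ^ 2 = 1 := by
  cases b <;> simp [boolSign]

lemma expect_boolSign_mul_boolSign [DecidableEq ι] (v w : ι) :
    𝔼 a : ι → Bool, boolSign (a v) * boolSign (a w) = if v = w then 1 else 0 := by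
  split_ifs with h
  · subst h
    simp [← pow_two, boolSign_sq]
  · have hflip : ∑ a : ι → Bool, boolSign (a v) * boolSign (a w) = 0 := by
      refine Finset.sum_involution (fun a _ => Function.update a v (!a v)) (fun a _ => ?_)
        (fun a _ _ heq => ?_) (fun _ _ => Finset.mem_univ _) (fun a _ => by simp)
      · cases a v <;> cases haw : a w <;> simp [boolSign, Function.update_of_ne (Ne.symm h), haw]
      · simpa using congrFun heq v
    rw [Fintype.expect_eq_sum_div_card, hflip, zero_div]

lemma expect_sq_expect_boolSign_mul [DecidableEq ι] (w : ι → ℝ) :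
    𝔼 a : ι → Bool, (𝔼 v, boolSign (a v) * w v) ^ 2 = (𝔼 v, w v ^ 2) / Fintype.card ι := by
  have hexpand : ∀ a : ι → Bool, (𝔼 v, boolSign (a v) * w v) ^ 2 =
      𝔼 v, 𝔼 v', w v * w v' * (boolSign (a v) * boolSign (a v')) := fun a => by
    rw [pow_two, Fintype.expect_mul_expect]
    exact Finset.expect_congr rfl fun v _ => Finset.expect_congr rfl fun v' _ => by ring
  simp only [hexpand]
  rw [Finset.expect_comm, Finset.expect_div]
  refine Finset.expect_congr rfl fun v _ => ?_
  rw [Finset.expect_comm]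
  simp only [← Finset.mul_expect, expect_boolSign_mul_boolSign]
  simp [NNRat.smul_def, pow_two, div_eq_inv_mul]

/-- The update of a vector of likelihood ratios `w` when the expert with advice `a v` has been
tested against the correct arm `c`: a correct prediction multiplies `w v` by `1 + 2ε`, a wrong one
by `1 - 2ε`. -/
noncomputable def tilt (ε : ℝ) (c : Bool) (a : ι → Bool) (w : ι → ℝ) (v : ι) : ℝ :=
  (1 + 2 * ε * (boolSign c * boolSign (a v))) * w v

lemma expect_tilt (ε : ℝ) (c : Bool) (a : ι → Bool) (w : ι → ℝ) :
    𝔼 v, tilt ε c a w v = 𝔼 v, w v + 2 * ε * boolSign c * 𝔼 v, boolSign (a v) * w v := by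
  rw [Finset.mul_expect, ← Finset.expect_add_distrib]
  exact Finset.expect_congr rfl fun v _ => by rw [tilt]; ring

lemma expect_tilt_sq (ε : ℝ) (c : Bool) (a : ι → Bool) (w : ι → ℝ) :
    𝔼 v, tilt ε c a w v ^ 2 =
      (1 + 4 * ε ^ 2) * 𝔼 v, w v ^ 2 + 4 * ε * boolSign c * 𝔼 v, boolSign (a v) * w v ^ 2 := by
  rw [Finset.mul_expect, Finset.mul_expect, ← Finset.expect_add_distrib]
  refine Finset.expect_congr rfl fun v _ => ?_
  rw [tilt]
  linear_combination (4 * ε ^ 2 * w v ^ 2 * boolSign c ^ 2) * boolSign_sq (a v) +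
    4 * ε ^ 2 * w v ^ 2 * boolSign_sq c

/-- The squared deviation from `1` of the average likelihood ratio `𝔼 v, w v`, plus the variance
that tilting along the known advice `a`, and then along fresh uniform advice, can still add.
Tilting multiplies the expected potential by at most `(1 + 4ε²)²`. -/
noncomputable def tiltPotential (ε : ℝ) (w : ι → ℝ) (a : ι → Bool) : ℝ :=
  (𝔼 v, w v - 1) ^ 2 +
    ((𝔼 v, w v ^ 2) / Fintype.card ι + 4 * ε ^ 2 * (𝔼 v, boolSign (a v) * w v) ^ 2) /
      (1 + 4 * ε ^ 2) ^ 2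

lemma sq_le_tiltPotential (ε : ℝ) (w : ι → ℝ) (a : ι → Bool) :
    (𝔼 v, w v - 1) ^ 2 ≤ tiltPotential ε w a := by
  have hsq : 0 ≤ 𝔼 v, w v ^ 2 := Finset.expect_nonneg fun v _ => sq_nonneg _
  exact le_add_of_nonneg_right (div_nonneg
    (add_nonneg (div_nonneg hsq (Nat.cast_nonneg _)) (by positivity)) (by positivity))

lemma expect_tiltPotential [DecidableEq ι] (ε : ℝ) (w : ι → ℝ) :
    𝔼 a, tiltPotential ε w a =
      (𝔼 v, w v - 1) ^ 2 + (𝔼 v, w v ^ 2) / Fintype.card ι / (1 + 4 * ε ^ 2) := by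
  simp only [tiltPotential, ← Finset.expect_div, Finset.expect_add_distrib, Fintype.expect_const,
    ← Finset.mul_expect, expect_sq_expect_boolSign_mul]
  field_simp

lemma expect_expect_tiltPotential_tilt_le [DecidableEq ι] (ε : ℝ) (w : ι → ℝ) (a : ι → Bool) :
    𝔼 c, 𝔼 b, tiltPotential ε (tilt ε c a w) b ≤ (1 + 4 * ε ^ 2) ^ 2 * tiltPotential ε w a := by
  have hsum : 𝔼 c, 𝔼 b, tiltPotential ε (tilt ε c a w) b =
      (𝔼 v, w v - 1) ^ 2 +
        ((𝔼 v, w v ^ 2) / Fintype.card ι + 4 * ε ^ 2 * (𝔼 v, boolSign (a v) * w v) ^ 2) := by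
    simp only [expect_tiltPotential, expect_tilt, expect_tilt_sq]
    rw [Fintype.expect_eq_sum_div_card, Fintype.sum_bool, Fintype.card_bool]
    simp only [boolSign, if_true, Bool.false_eq_true, if_false]
    field_simp
    ring
  rw [hsum, tiltPotential, mul_add, mul_div_cancel₀ _ (by positivity)]
  gcongr
  exact le_mul_of_one_le_left (sq_nonneg _) (one_le_pow₀ (by nlinarith [sq_nonneg ε]))

end Signs

-- The discount costs more than a factor `y` only once `N` exceeds `log y / (2 * c)`.
lemma three_quarters_le {L y c : ℝ} (hL : 0 ≤ L) (hy : 1 < y) (hc : 0 ≤ c) (N : ℕ) :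
    3 / 4 ≤ L + y * ((L - 1) ^ 2 / ((1 + c) ^ 2) ^ N) + 2 * c / Real.log y * N := by
  have hlog : 0 < Real.log y := Real.log_pos hy
  rcases le_or_gt (((1 + c) ^ 2) ^ N) y with hN | hN
  · have hdev : (L - 1) ^ 2 ≤ y * ((L - 1) ^ 2 / ((1 + c) ^ 2) ^ N) := by
      rw [mul_div_left_comm]
      exact le_mul_of_one_le_right (sq_nonneg _) ((one_le_div (by positivity)).2 hN)
    have hcount : 0 ≤ 2 * c / Real.log y * N := by positivity
    linarith [sq_nonneg (L - 1 / 2)]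
  · have hdev : 0 ≤ y * ((L - 1) ^ 2 / ((1 + c) ^ 2) ^ N) := by positivity
    have hgrowth : y < Real.exp (2 * c * N) := by
      calc y < ((1 + c) ^ 2) ^ N := hN
        _ ≤ (Real.exp c ^ 2) ^ N := by gcongr; linarith [Real.add_one_le_exp c]
        _ = Real.exp (2 * c * N) := by
          rw [← pow_mul, ← Real.exp_nat_mul]
          push_cast
          ring_nf
    have hcount : 1 ≤ 2 * c / Real.log y * N := by
      rw [div_mul_eq_mul_div, one_le_div hlog]
      exact ((Real.log_lt_iff_lt_exp (by positivity)).2 hgrowth).le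
    linarith

/-! ### The interaction seen through the observed history -/

section Interaction

variable {k n : ℕ}

/-- Density of the next advice vector of batch `u` given the observed history. -/
noncomputable def batchAdviceDensity (h : List (RObs k n)) (u : Fin k) (a : Fin n → Bool) : ℝ :=
  match h with
  | [] => (1 / 2 : ℝ) ^ n
  | o :: _ => if armBatch o.2.1 = some u then (1 / 2 : ℝ) ^ n else if a = o.1 u then 1 else 0

/-- Probability that the arm `(u, c)` is the correct arm of batch `u`. -/
noncomputable def correctProb (ε : ℝ) (s : RStrategy k n) (A : RAdviceM k n) (u : Fin k)
    (c : Bool) : ℝ :=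
  batchFactor ε s A (fun _ => c) u

/-- Density of the loss observed when pulling a given arm. Pulling `(u, i)` and observing the loss
`l` reveals that the correct arm of batch `u` is `(u, i ^^ l)`. -/
noncomputable def obsLossDensity (ε : ℝ) (s : RStrategy k n) (A : RAdviceM k n) :
    RArm k → Bool → ℝ
  | none, l => if l then 1 / 2 - ε / 2 else 1 / 2 + ε / 2
  | some (u, i), l => correctProb ε s A u (i ^^ l)

lemma sum_half_pow_mul (G : (Fin n → Bool) → ℝ) : ∑ a, (1 / 2 : ℝ) ^ n * G a = 𝔼 a, G a := by
  rw [Fintype.expect_eq_sum_div_card, ← Finset.mul_sum]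
  simp [div_eq_inv_mul]

lemma sum_batchAdviceDensity_nil_mul (u : Fin k) (G : (Fin n → Bool) → ℝ) :
    ∑ a, batchAdviceDensity [] u a * G a = 𝔼 a, G a :=
  sum_half_pow_mul G

lemma sum_batchAdviceDensity_cons_mul_of_eq {u : Fin k} {o : RObs k n}
    (ho : armBatch o.2.1 = some u) (h : List (RObs k n)) (G : (Fin n → Bool) → ℝ) :
    ∑ a, batchAdviceDensity (o :: h) u a * G a = 𝔼 a, G a := by
  simp only [batchAdviceDensity, if_pos ho, sum_half_pow_mul]

lemma sum_batchAdviceDensity_cons_mul_of_ne {u : Fin k} {o : RObs k n}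
    (ho : armBatch o.2.1 ≠ some u) (h : List (RObs k n)) (G : (Fin n → Bool) → ℝ) :
    ∑ a, batchAdviceDensity (o :: h) u a * G a = G (o.1 u) := by
  simp [batchAdviceDensity, ho]

lemma sum_batchAdviceDensity (h : List (RObs k n)) (u : Fin k) :
    ∑ a, batchAdviceDensity h u a = 1 := by
  suffices hone : ∑ a, batchAdviceDensity h u a * 1 = 1 by simpa using hone
  rcases h with _ | ⟨o, h⟩
  · rw [sum_batchAdviceDensity_nil_mul, Fintype.expect_one]
  · by_cases ho : armBatch o.2.1 = some u
    · rw [sum_batchAdviceDensity_cons_mul_of_eq ho, Fintype.expect_one]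
    · rw [sum_batchAdviceDensity_cons_mul_of_ne ho]

lemma batchAdviceDensity_nonneg (h : List (RObs k n)) (u : Fin k) (a : Fin n → Bool) :
    0 ≤ batchAdviceDensity h u a := by
  unfold batchAdviceDensity
  split
  · positivity
  · split_ifs <;> positivity

lemma adviceDensity_eq_prod (hist : List (RRecord k n)) (A : RAdviceM k n) :
    adviceDensity hist A = ∏ u, batchAdviceDensity (hist.map obsOf) u (A u) := by
  cases hist with
  | nil => simp [adviceDensity, batchAdviceDensity, mul_comm k n, pow_mul]
  | cons r hist => simp [adviceDensity, batchAdviceDensity, obsOf]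

lemma sum_correctProb (ε : ℝ) (s : RStrategy k n) (A : RAdviceM k n) (u : Fin k) :
    ∑ c, correctProb ε s A u c = 1 := by
  rcases s with _ | ⟨u', v'⟩
  · norm_num [correctProb, batchFactor]
  · by_cases hu : u = u'
    · cases hA : A u v' <;> simp [correctProb, batchFactor, ← hu, hA] <;> norm_num
    · simp [correctProb, batchFactor, hu]

lemma correctProb_nonneg {ε : ℝ} (hε : |ε| ≤ 1 / 2) (s : RStrategy k n) (A : RAdviceM k n)
    (u : Fin k) (c : Bool) : 0 ≤ correctProb ε s A u c := by
  obtain ⟨hlow, hup⟩ := abs_le.1 hε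
  rcases s with _ | ⟨u', v'⟩
  · norm_num [correctProb, batchFactor]
  · simp only [correctProb, batchFactor]
    split_ifs <;> linarith

lemma obsLossDensity_nonneg {ε : ℝ} (hε : |ε| ≤ 1 / 2) (s : RStrategy k n) (A : RAdviceM k n)
    (i : RArm k) (l : Bool) : 0 ≤ obsLossDensity ε s A i l := by
  obtain ⟨hlow, hup⟩ := abs_le.1 hε
  rcases i with _ | ⟨u, i⟩
  · simp only [obsLossDensity]
    split_ifs <;> linarith
  · exact correctProb_nonneg hε s A u _

lemma sum_obsLossDensity (ε : ℝ) (s : RStrategy k n) (A : RAdviceM k n) (i : RArm k) :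
    ∑ l, obsLossDensity ε s A i l = 1 := by
  rcases i with _ | ⟨u, i⟩
  · simp only [obsLossDensity, Fintype.sum_bool, if_true, Bool.false_eq_true, if_false]
    ring
  · rw [← sum_correctProb ε s A u]
    cases i <;> simp [obsLossDensity, add_comm]

lemma lossDensity_eq_prod (ε : ℝ) (s : RStrategy k n) (A : RAdviceM k n) (L : RLossState k) :
    lossDensity ε s A L = obsLossDensity ε s A none L.2 * ∏ u, correctProb ε s A u (L.1 u) :=
  rfl

lemma lossDensity_nonneg {ε : ℝ} (hε : |ε| ≤ 1 / 2) (s : RStrategy k n) (A : RAdviceM k n)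
    (L : RLossState k) : 0 ≤ lossDensity ε s A L := by
  rw [lossDensity_eq_prod]
  exact mul_nonneg (obsLossDensity_nonneg hε s A none L.2)
    (Finset.prod_nonneg fun u _ => correctProb_nonneg hε s A u _)

lemma sum_lossDensity_mul (ε : ℝ) (s : RStrategy k n) (A : RAdviceM k n) (i : RArm k)
    (φ : Bool → ℝ) :
    ∑ L, lossDensity ε s A L * φ (armLoss L i) = ∑ l, obsLossDensity ε s A i l * φ l := by
  simp only [lossDensity_eq_prod]
  rw [Fintype.sum_prod_type_right]
  rcases i with _ | ⟨u, i⟩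
  · refine Finset.sum_congr rfl fun b _ => ?_
    simp only [armLoss]
    rw [← Finset.sum_mul, ← Finset.mul_sum, sum_pi_prod_eq_one _ (sum_correctProb ε s A), mul_one]
  · have hmarginal : ∑ c : Fin k → Bool, (∏ w, correctProb ε s A w (c w)) *
        φ (if i = c u then false else true) = ∑ l, obsLossDensity ε s A (some (u, i)) l * φ l := by
      rw [sum_pi_prod_mul_eval _ (sum_correctProb ε s A) u
        fun c => φ (if i = c then false else true)]
      cases i <;> simp [obsLossDensity, add_comm]
    simp only [armLoss, mul_assoc, ← Finset.mul_sum, hmarginal]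
    rw [← Finset.sum_mul, sum_obsLossDensity, one_mul]

/-- One round of the interaction as an operator on functions of the observed history: the expected
value after the next round, on the event that the algorithm continues. -/
noncomputable def step (ε : ℝ) (s : RStrategy k n) (B : RSBI k n) (F : List (RObs k n) → ℝ)
    (h : List (RObs k n)) : ℝ :=
  B.decide h none * ∑ A : RAdviceM k n, (∏ u, batchAdviceDensity h u (A u)) *
    ∑ i : RArm k, B.pull h A i * ∑ l : Bool, obsLossDensity ε s A i l * F ((A, i, l) :: h)

lemma step_eq_of_cons_eq (ε : ℝ) (s : RStrategy k n) {B : RSBI k n} (hB : IsRSBI B)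
    {F : List (RObs k n) → ℝ} {h : List (RObs k n)} {c : ℝ} (hF : ∀ o, F (o :: h) = c) :
    step ε s B F h = B.decide h none * c := by
  simp only [step, hF, ← Finset.sum_mul, sum_obsLossDensity, one_mul, (hB.2 _ _).2,
    sum_pi_prod_eq_one _ (sum_batchAdviceDensity h)]

lemma step_le_of_sum_le {ε : ℝ} {s : RStrategy k n} {B : RSBI k n} (hB : IsRSBI B)
    {F : List (RObs k n) → ℝ} {h : List (RObs k n)} (u : Fin k) {G : (Fin n → Bool) → ℝ}
    (hF : ∀ (A : RAdviceM k n) (i : RArm k),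
      ∑ l, obsLossDensity ε s A i l * F ((A, i, l) :: h) ≤ G (A u)) :
    step ε s B F h ≤ B.decide h none * ∑ a, batchAdviceDensity h u a * G a := by
  rw [← sum_pi_prod_mul_eval _ (sum_batchAdviceDensity h) u G]
  refine mul_le_mul_of_nonneg_left (Finset.sum_le_sum fun A _ => ?_) ((hB.1 h).1 none)
  refine mul_le_mul_of_nonneg_left ?_
    (Finset.prod_nonneg fun u _ => batchAdviceDensity_nonneg h u _)
  calc ∑ i, B.pull h A i * ∑ l, obsLossDensity ε s A i l * F ((A, i, l) :: h)
      ≤ ∑ i, B.pull h A i * G (A u) :=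
        Finset.sum_le_sum fun i _ => mul_le_mul_of_nonneg_left (hF A i) ((hB.2 h A).1 i)
    _ = G (A u) := by rw [← Finset.sum_mul, (hB.2 h A).2, one_mul]

/-- Expectation of a function of the observed history on the event that the algorithm completes
`t` rounds. -/
noncomputable def runExp (ε : ℝ) (s : RStrategy k n) (B : RSBI k n) (t : ℕ) :
    (List (RObs k n) → ℝ) →ₗ[ℝ] ℝ :=
  ∑ g : Fin t → RRecord k n, runProb ε s B t g • LinearMap.proj (fullObsHist g)

lemma runExp_apply (ε : ℝ) (s : RStrategy k n) (B : RSBI k n) (t : ℕ)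
    (F : List (RObs k n) → ℝ) :
    runExp ε s B t F = ∑ g : Fin t → RRecord k n, runProb ε s B t g * F (fullObsHist g) := by
  simp [runExp]

lemma runExp_zero (ε : ℝ) (s : RStrategy k n) (B : RSBI k n) (F : List (RObs k n) → ℝ) :
    runExp ε s B 0 F = F [] := by
  simp [runExp_apply, runProb, fullObsHist]

lemma ofFn_snoc {α : Type*} {t : ℕ} (g : Fin t → α) (r : α) :
    List.ofFn (Fin.snoc g r : Fin (t + 1) → α) = List.ofFn g ++ [r] := by
  rw [List.ofFn_succ']
  simp

lemma histUpTo_snoc {t : ℕ} (g : Fin t → RRecord k n) (r : RRecord k n) {i : ℕ} (hi : i ≤ t) :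
    histUpTo (Fin.snoc g r : Fin (t + 1) → RRecord k n) i = histUpTo g i := by
  rw [histUpTo, ofFn_snoc, List.take_append_of_le_length (by simpa using hi), histUpTo]

lemma obsHist_snoc {t : ℕ} (g : Fin t → RRecord k n) (r : RRecord k n) {i : ℕ} (hi : i ≤ t) :
    obsHist (Fin.snoc g r : Fin (t + 1) → RRecord k n) i = obsHist g i := by
  rw [obsHist, histUpTo_snoc g r hi, obsHist]

lemma obsHist_self {t : ℕ} (g : Fin t → RRecord k n) : obsHist g t = fullObsHist g := by
  rw [obsHist, histUpTo, List.take_of_length_le (by simp), fullObsHist]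

lemma fullObsHist_snoc {t : ℕ} (g : Fin t → RRecord k n) (r : RRecord k n) :
    fullObsHist (Fin.snoc g r : Fin (t + 1) → RRecord k n) = obsOf r :: fullObsHist g := by
  rw [fullObsHist, ofFn_snoc]
  simp [fullObsHist]

lemma runProb_snoc (ε : ℝ) (s : RStrategy k n) (B : RSBI k n) {t : ℕ}
    (g : Fin t → RRecord k n) (r : RRecord k n) :
    runProb ε s B (t + 1) (Fin.snoc g r) = runProb ε s B t g *
      (B.decide (fullObsHist g) none *
        ((∏ u, batchAdviceDensity (fullObsHist g) u (r.1 u)) * lossDensity ε s r.1 r.2.1 *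
          B.pull (fullObsHist g) r.1 r.2.2)) := by
  have hlast : (histUpTo g t).map obsOf = fullObsHist g := obsHist_self g
  rw [runProb, Fin.prod_univ_castSucc, runProb]
  congr 1
  · refine Finset.prod_congr rfl fun i _ => ?_
    simp only [Fin.val_castSucc, Fin.snoc_castSucc, obsHist_snoc g r i.2.le,
      histUpTo_snoc g r i.2.le]
  · simp only [Fin.val_last, Fin.snoc_last, obsHist_snoc g r le_rfl, histUpTo_snoc g r le_rfl,
      obsHist_self, stratDensity, adviceDensity_eq_prod, hlast]

lemma sum_runProb_snoc_mul (ε : ℝ) (s : RStrategy k n) (B : RSBI k n) {t : ℕ}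
    (F : List (RObs k n) → ℝ) (g : Fin t → RRecord k n) :
    ∑ r, runProb ε s B (t + 1) (Fin.snoc g r) * F (obsOf r :: fullObsHist g) =
      runProb ε s B t g * step ε s B F (fullObsHist g) := by
  simp only [step, ← sum_lossDensity_mul, Finset.mul_sum]
  rw [Fintype.sum_prod_type]
  refine Finset.sum_congr rfl fun A _ => ?_
  rw [Fintype.sum_prod_type_right]
  refine Finset.sum_congr rfl fun i _ => Finset.sum_congr rfl fun L _ => ?_
  rw [runProb_snoc, obsOf]
  ring

lemma runExp_succ (ε : ℝ) (s : RStrategy k n) (B : RSBI k n) (t : ℕ)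
    (F : List (RObs k n) → ℝ) :
    runExp ε s B (t + 1) F = runExp ε s B t (step ε s B F) := by
  rw [runExp_apply, runExp_apply, ← (Fin.snocEquiv fun _ => RRecord k n).sum_comp,
    Fintype.sum_prod_type_right]
  refine Finset.sum_congr rfl fun g _ => ?_
  rw [← sum_runProb_snoc_mul]
  refine Finset.sum_congr rfl fun r _ => ?_
  rw [← fullObsHist_snoc]
  rfl

lemma runProb_nonneg {ε : ℝ} (hε : |ε| ≤ 1 / 2) (s : RStrategy k n) {B : RSBI k n}
    (hB : IsRSBI B) {t : ℕ} (g : Fin t → RRecord k n) : 0 ≤ runProb ε s B t g := by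
  refine Finset.prod_nonneg fun i _ => mul_nonneg ((hB.1 _).1 _)
    (mul_nonneg (mul_nonneg ?_ (lossDensity_nonneg hε _ _ _)) ((hB.2 _ _).1 _))
  rw [adviceDensity_eq_prod]
  exact Finset.prod_nonneg fun u _ => batchAdviceDensity_nonneg _ _ _

lemma runExp_mono {ε : ℝ} (hε : |ε| ≤ 1 / 2) (s : RStrategy k n) {B : RSBI k n}
    (hB : IsRSBI B) (t : ℕ) : Monotone (runExp ε s B t) := fun F G hFG => by
  rw [runExp_apply, runExp_apply]
  exact Finset.sum_le_sum fun g _ => mul_le_mul_of_nonneg_left (hFG _) (runProb_nonneg hε s hB g)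

lemma runExp_nonneg {ε : ℝ} (hε : |ε| ≤ 1 / 2) (s : RStrategy k n) {B : RSBI k n}
    (hB : IsRSBI B) (t : ℕ) {F : List (RObs k n) → ℝ} (hF : 0 ≤ F) : 0 ≤ runExp ε s B t F := by
  simpa using runExp_mono hε s hB t hF

lemma sum_runExp_le {ε : ℝ} (hε : |ε| ≤ 1 / 2) (s : RStrategy k n) {B : RSBI k n}
    (hB : IsRSBI B) {H Φ : List (RObs k n) → ℝ} (hΦ_nonneg : 0 ≤ Φ)
    (hΦ : H + step ε s B Φ ≤ Φ) (T : ℕ) :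
    ∑ t ∈ Finset.range T, runExp ε s B t H ≤ Φ [] := by
  suffices hinv : ∑ t ∈ Finset.range T, runExp ε s B t H + runExp ε s B T Φ ≤ Φ [] by
    linarith [runExp_nonneg hε s hB T hΦ_nonneg]
  induction T with
  | zero => simp [runExp_zero]
  | succ T ih =>
    have hround := runExp_mono hε s hB T hΦ
    rw [map_add] at hround
    rw [Finset.sum_range_succ, runExp_succ]
    linarith

/-! ### Halting with a given output -/

/-- Expectation of a function of the observed history on the event that the algorithm halts with
output `b` after fewer than `T` rounds. -/
noncomputable def haltExp (ε : ℝ) (s : RStrategy k n) (B : RSBI k n) (T : ℕ)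
    (b : Option (Fin k)) : (List (RObs k n) → ℝ) →ₗ[ℝ] ℝ :=
  ∑ t ∈ Finset.range T, runExp ε s B t ∘ₗ LinearMap.mulLeft ℝ fun h => B.decide h (some b)

lemma haltExp_apply (ε : ℝ) (s : RStrategy k n) (B : RSBI k n) (T : ℕ) (b : Option (Fin k))
    (F : List (RObs k n) → ℝ) :
    haltExp ε s B T b F =
      ∑ t ∈ Finset.range T, runExp ε s B t ((fun h => B.decide h (some b)) * F) := by
  simp [haltExp]

lemma haltExp_mono {ε : ℝ} (hε : |ε| ≤ 1 / 2) (s : RStrategy k n) {B : RSBI k n}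
    (hB : IsRSBI B) (T : ℕ) (b : Option (Fin k)) : Monotone (haltExp ε s B T b) := fun F G hFG => by
  rw [haltExp_apply, haltExp_apply]
  exact Finset.sum_le_sum fun t _ => runExp_mono hε s hB t fun h =>
    mul_le_mul_of_nonneg_left (hFG h) ((hB.1 h).1 _)

lemma haltExp_nonneg {ε : ℝ} (hε : |ε| ≤ 1 / 2) (s : RStrategy k n) {B : RSBI k n}
    (hB : IsRSBI B) (T : ℕ) (b : Option (Fin k)) {F : List (RObs k n) → ℝ} (hF : 0 ≤ F) :
    0 ≤ haltExp ε s B T b F := by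
  simpa using haltExp_mono hε s hB T b hF

lemma decide_none_add_sum_decide_some {B : RSBI k n} (hB : IsRSBI B) (h : List (RObs k n)) :
    B.decide h none + ∑ b, B.decide h (some b) = 1 :=
  (Fintype.sum_option _).symm.trans (hB.1 h).2

lemma decide_some_add_decide_none_le_one {B : RSBI k n} (hB : IsRSBI B) (h : List (RObs k n))
    (b : Option (Fin k)) : B.decide h (some b) + B.decide h none ≤ 1 := by
  have hb := Finset.single_le_sum (f := fun b => B.decide h (some b))
    (fun b _ => (hB.1 h).1 (some b)) (Finset.mem_univ b)
  linarith [decide_none_add_sum_decide_some hB h]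

lemma haltExp_le_of_step_le {ε : ℝ} (hε : |ε| ≤ 1 / 2) (s : RStrategy k n) {B : RSBI k n}
    (hB : IsRSBI B) (T : ℕ) (b : Option (Fin k)) {F Φ : List (RObs k n) → ℝ} (hΦ_nonneg : 0 ≤ Φ)
    (hF : F ≤ Φ) (hΦ : ∀ h, step ε s B Φ h ≤ B.decide h none * Φ h) :
    haltExp ε s B T b F ≤ Φ [] := by
  refine (haltExp_mono hε s hB T b hF).trans ?_
  rw [haltExp_apply]
  refine sum_runExp_le hε s hB hΦ_nonneg (fun h => ?_) T
  calc B.decide h (some b) * Φ h + step ε s B Φ h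
      ≤ (B.decide h (some b) + B.decide h none) * Φ h := by linarith [hΦ h]
    _ ≤ Φ h := mul_le_of_le_one_left (hΦ_nonneg h) (decide_some_add_decide_none_le_one hB h b)

lemma surviveProb_eq_runExp (ε : ℝ) (s : RStrategy k n) (B : RSBI k n) (t : ℕ) :
    surviveProb ε s B t = runExp ε s B t 1 := by
  simp [surviveProb, runExp_apply]

lemma surviveProb_nonneg {ε : ℝ} (hε : |ε| ≤ 1 / 2) (s : RStrategy k n) {B : RSBI k n}
    (hB : IsRSBI B) (t : ℕ) : 0 ≤ surviveProb ε s B t :=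
  Finset.sum_nonneg fun g _ => runProb_nonneg hε s hB g

lemma haltExp_length_le_sum_surviveProb {ε : ℝ} (hε : |ε| ≤ 1 / 2) (s : RStrategy k n)
    {B : RSBI k n} (hB : IsRSBI B) (T : ℕ) (b : Option (Fin k)) :
    haltExp ε s B T b (fun h => (h.length : ℝ)) ≤
      ∑ t ∈ Finset.range T, surviveProb ε s B (t + 1) := by
  let len : List (RObs k n) → ℝ := fun h => h.length
  let D : List (RObs k n) → ℝ := fun h => B.decide h (some b)
  have hdrift : (D * len - step ε s B 1) + step ε s B len ≤ len := fun h => by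
    have hone : step ε s B 1 h = B.decide h none * 1 := step_eq_of_cons_eq ε s hB fun _ => rfl
    have hlen : step ε s B len h = B.decide h none * (h.length + 1) :=
      step_eq_of_cons_eq ε s hB fun _ => by simp [len]
    calc (B.decide h (some b) * h.length - step ε s B 1 h) + step ε s B len h
        = (B.decide h (some b) + B.decide h none) * h.length := by rw [hone, hlen]; ring
      _ ≤ h.length :=
        mul_le_of_le_one_left (Nat.cast_nonneg _) (decide_some_add_decide_none_le_one hB h b)
  have hsum := sum_runExp_le hε s hB (fun h => Nat.cast_nonneg _) hdrift T
  simp only [map_sub, Finset.sum_sub_distrib, ← runExp_succ, ← surviveProb_eq_runExp] at hsum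
  rw [haltExp_apply]
  simpa [len] using hsum

lemma haltProb_eq_runExp (ε : ℝ) (s : RStrategy k n) (B : RSBI k n) (t : ℕ)
    (b : Option (Fin k)) : haltProb ε s B t b = runExp ε s B t fun h => B.decide h (some b) := by
  rw [runExp_apply, haltProb]

lemma ofReal_haltExp_one {ε : ℝ} (hε : |ε| ≤ 1 / 2) (s : RStrategy k n) {B : RSBI k n}
    (hB : IsRSBI B) (T : ℕ) (b : Option (Fin k)) :
    ENNReal.ofReal (haltExp ε s B T b 1) =
      ∑ t ∈ Finset.range T, ENNReal.ofReal (haltProb ε s B t b) := by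
  rw [haltExp_apply, mul_one, ← ENNReal.ofReal_sum_of_nonneg fun t _ => ?_]
  · simp only [haltProb_eq_runExp]
  · rw [haltProb_eq_runExp]
    exact runExp_nonneg hε s hB t fun h => (hB.1 h).1 _

lemma outProb_eq_iSup {ε : ℝ} (hε : |ε| ≤ 1 / 2) (s : RStrategy k n) {B : RSBI k n}
    (hB : IsRSBI B) (b : Option (Fin k)) :
    outProb ε s B b = ⨆ T, ENNReal.ofReal (haltExp ε s B T b 1) := by
  simp only [outProb, ENNReal.tsum_eq_iSup_nat, ofReal_haltExp_one hε s hB]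

lemma sum_haltExp_one_le_one {ε : ℝ} (hε : |ε| ≤ 1 / 2) (s : RStrategy k n) {B : RSBI k n}
    (hB : IsRSBI B) (T : ℕ) : ∑ b, haltExp ε s B T b 1 ≤ 1 := by
  have hdrift : (∑ b, fun h => B.decide h (some b)) + step ε s B 1 ≤ 1 := fun h => by
    have hone : step ε s B 1 h = B.decide h none * 1 := step_eq_of_cons_eq ε s hB fun _ => rfl
    rw [Pi.add_apply, Finset.sum_apply, hone, mul_one, add_comm,
      decide_none_add_sum_decide_some hB, Pi.one_apply]
  simpa only [haltExp_apply, mul_one, map_sum, Finset.sum_comm (s := Finset.range T),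
    Pi.one_apply] using sum_runExp_le hε s hB zero_le_one hdrift T

lemma sum_outProb_le_one {ε : ℝ} (hε : |ε| ≤ 1 / 2) (s : RStrategy k n) {B : RSBI k n}
    (hB : IsRSBI B) : ∑ b, outProb ε s B b ≤ 1 := by
  simp only [outProb]
  rw [← Summable.tsum_finsetSum fun _ _ => ENNReal.summable]
  refine ENNReal.tsum_le_of_sum_range_le fun T => ?_
  rw [Finset.sum_comm]
  simp only [← ofReal_haltExp_one hε s hB]
  rw [← ENNReal.ofReal_sum_of_nonneg fun b _ => haltExp_nonneg hε s hB T b zero_le_one]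
  exact ENNReal.ofReal_le_one.2 (sum_haltExp_one_le_one hε s hB T)

/-! ### Likelihood ratios -/

/-- Likelihood ratios of the strategies `S_(u,v)` against `S_0`, indexed by `v`, as a function of
the observed history. -/
noncomputable def likelihood (ε : ℝ) (u : Fin k) : List (RObs k n) → Fin n → ℝ
  | [] => 1
  | (_, none, _) :: h => likelihood ε u h
  | (A, some (u', i), l) :: h =>
    if u' = u then tilt ε (i ^^ l) (A u) (likelihood ε u h) else likelihood ε u h

lemma likelihood_cons_self (ε : ℝ) (u : Fin k) (A : RAdviceM k n) (i l : Bool)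
    (h : List (RObs k n)) :
    likelihood ε u ((A, some (u, i), l) :: h) = tilt ε (i ^^ l) (A u) (likelihood ε u h) :=
  if_pos rfl

lemma likelihood_cons_of_ne (ε : ℝ) {u : Fin k} {o : RObs k n} (ho : armBatch o.2.1 ≠ some u)
    (h : List (RObs k n)) : likelihood ε u (o :: h) = likelihood ε u h := by
  obtain ⟨A, _ | ⟨u', i⟩, l⟩ := o
  · rfl
  · exact if_neg fun hu => ho (congrArg some hu)

lemma obsLossDensity_none_self (ε : ℝ) (A : RAdviceM k n) (u : Fin k) (i l : Bool) :
    obsLossDensity ε none A (some (u, i)) l = 1 / 2 :=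
  rfl

lemma obsLossDensity_some_self (ε : ℝ) (A : RAdviceM k n) (u : Fin k) (v : Fin n) (i l : Bool) :
    obsLossDensity ε (some (u, v)) A (some (u, i)) l =
      1 / 2 * (1 + 2 * ε * (boolSign (i ^^ l) * boolSign (A u v))) := by
  cases i <;> cases l <;> cases hA : A u v <;>
    simp [obsLossDensity, correctProb, batchFactor, boolSign, hA] <;> ring

lemma obsLossDensity_some_of_ne (ε : ℝ) {u : Fin k} (v : Fin n) (A : RAdviceM k n) {i : RArm k}
    (hi : armBatch i ≠ some u) (l : Bool) :
    obsLossDensity ε (some (u, v)) A i l = obsLossDensity ε none A i l := by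
  rcases i with _ | ⟨u', i⟩
  · rfl
  · exact if_neg fun hu => hi (congrArg some hu)

lemma obsLossDensity_some_mul_likelihood (ε : ℝ) (u : Fin k) (v : Fin n) (A : RAdviceM k n)
    (i : RArm k) (l : Bool) (h : List (RObs k n)) :
    obsLossDensity ε (some (u, v)) A i l * likelihood ε u h v =
      obsLossDensity ε none A i l * likelihood ε u ((A, i, l) :: h) v := by
  by_cases hi : armBatch i = some u
  · obtain ⟨⟨_, i⟩, rfl, rfl⟩ := Option.map_eq_some_iff.1 hi
    rw [obsLossDensity_some_self, likelihood_cons_self, tilt, obsLossDensity_none_self, mul_assoc]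
  · rw [obsLossDensity_some_of_ne ε v A hi, likelihood_cons_of_ne ε hi]

lemma likelihood_nonneg {ε : ℝ} (hε : |ε| ≤ 1 / 2) (u : Fin k) (h : List (RObs k n)) :
    0 ≤ likelihood ε u h := by
  induction h with
  | nil => exact zero_le_one
  | cons o h ih =>
    intro v
    obtain ⟨A, i, l⟩ := o
    by_cases hi : armBatch i = some u
    · obtain ⟨⟨u, i⟩, rfl, rfl⟩ := Option.map_eq_some_iff.1 hi
      have hfactor := obsLossDensity_nonneg hε (some (u, v)) A (some (u, i)) l
      rw [obsLossDensity_some_self] at hfactor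
      rw [likelihood_cons_self]
      exact mul_nonneg (by linarith) (ih v)
    · rw [likelihood_cons_of_ne ε hi]
      exact ih v

lemma likelihood_mul_step (ε : ℝ) (u : Fin k) (v : Fin n) (B : RSBI k n)
    (F : List (RObs k n) → ℝ) (h : List (RObs k n)) :
    likelihood ε u h v * step ε (some (u, v)) B F h =
      step ε none B (fun h => likelihood ε u h v * F h) h := by
  simp only [step, ← mul_assoc (obsLossDensity ε none _ _ _),
    ← obsLossDensity_some_mul_likelihood, Finset.mul_sum]
  refine Finset.sum_congr rfl fun A _ => Finset.sum_congr rfl fun i _ =>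
    Finset.sum_congr rfl fun l _ => ?_
  ring

lemma runExp_some (ε : ℝ) (u : Fin k) (v : Fin n) (B : RSBI k n) (t : ℕ)
    (F : List (RObs k n) → ℝ) :
    runExp ε (some (u, v)) B t F = runExp ε none B t fun h => likelihood ε u h v * F h := by
  induction t generalizing F with
  | zero => simp [runExp_zero, likelihood]
  | succ t ih => simp only [runExp_succ, ih, likelihood_mul_step]

lemma haltExp_some (ε : ℝ) (u : Fin k) (v : Fin n) (B : RSBI k n) (T : ℕ) (b : Option (Fin k))
    (F : List (RObs k n) → ℝ) :
    haltExp ε (some (u, v)) B T b F = haltExp ε none B T b fun h => likelihood ε u h v * F h := by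
  simp only [haltExp_apply, runExp_some, Pi.mul_apply]
  refine Finset.sum_congr rfl fun t _ => congrArg _ (funext fun h => ?_)
  exact mul_left_comm _ _ _

/-- Number of pulls of batch `u`. -/
def pulls (u : Fin k) (h : List (RObs k n)) : ℕ :=
  h.countP fun o => armBatch o.2.1 = some u

lemma pulls_cons_of_eq {u : Fin k} {o : RObs k n} (ho : armBatch o.2.1 = some u)
    (h : List (RObs k n)) : pulls u (o :: h) = pulls u h + 1 :=
  List.countP_cons_of_pos (by simpa using ho)

lemma pulls_cons_of_ne {u : Fin k} {o : RObs k n} (ho : armBatch o.2.1 ≠ some u)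
    (h : List (RObs k n)) : pulls u (o :: h) = pulls u h :=
  List.countP_cons_of_neg (by simpa using ho)

lemma sum_pulls_le_length (h : List (RObs k n)) : ∑ u, pulls u h ≤ h.length := by
  induction h with
  | nil => simp [pulls]
  | cons o h ih =>
    have hcons : ∀ u, pulls u (o :: h) = pulls u h + if armBatch o.2.1 = some u then 1 else 0 :=
      fun u => by simp [pulls, List.countP_cons]
    have hone : ∑ u, (if armBatch o.2.1 = some u then 1 else 0) ≤ 1 := by
      rcases armBatch o.2.1 with _ | u' <;> simp
    simp only [hcons, Finset.sum_add_distrib, List.length_cons]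
    exact Nat.add_le_add ih hone

/-! ### The discounted variance of the average likelihood ratio -/

/-- The expectation, over the next advice vector of batch `u`, of the tilt potential of the
likelihood ratios of batch `u`, discounted by the largest growth factor of each pull. -/
noncomputable def histPotential (ε : ℝ) (u : Fin k) (h : List (RObs k n)) : ℝ :=
  (∑ a, batchAdviceDensity h u a * tiltPotential ε (likelihood ε u h) a) /
    ((1 + 4 * ε ^ 2) ^ 2) ^ pulls u h

lemma sq_div_le_histPotential (ε : ℝ) (u : Fin k) (h : List (RObs k n)) :
    (𝔼 v, likelihood ε u h v - 1) ^ 2 / ((1 + 4 * ε ^ 2) ^ 2) ^ pulls u h ≤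
      histPotential ε u h := by
  refine div_le_div_of_nonneg_right ?_ (by positivity)
  calc (𝔼 v, likelihood ε u h v - 1) ^ 2
      = ∑ a, batchAdviceDensity h u a * (𝔼 v, likelihood ε u h v - 1) ^ 2 := by
        rw [← Finset.sum_mul, sum_batchAdviceDensity, one_mul]
    _ ≤ ∑ a, batchAdviceDensity h u a * tiltPotential ε (likelihood ε u h) a :=
        Finset.sum_le_sum fun a _ => mul_le_mul_of_nonneg_left (sq_le_tiltPotential ε _ a)
          (batchAdviceDensity_nonneg h u a)

lemma histPotential_nonneg (ε : ℝ) (u : Fin k) : 0 ≤ histPotential (n := n) ε u := fun h =>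
  (div_nonneg (sq_nonneg _) (by positivity)).trans (sq_div_le_histPotential ε u h)

lemma histPotential_nil_le (ε : ℝ) (u : Fin k) (hn : n ≠ 0) :
    histPotential ε u ([] : List (RObs k n)) ≤ 1 / n := by
  have : NeZero n := ⟨hn⟩
  simp only [histPotential, sum_batchAdviceDensity_nil_mul, expect_tiltPotential, likelihood,
    pulls, List.countP_nil, pow_zero, div_one, Pi.one_apply, Fintype.expect_one, one_pow,
    sub_self, Fintype.card_fin]
  rw [zero_pow two_ne_zero, zero_add]
  exact div_le_self (by positivity) (by nlinarith [sq_nonneg ε])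

lemma sum_half_mul_eq_expect_xor (i : Bool) (F : Bool → ℝ) :
    ∑ l, 1 / 2 * F (i ^^ l) = 𝔼 c, F c := by
  rw [← Finset.mul_sum, Fintype.expect_eq_sum_div_card, Fintype.card_bool]
  cases i <;> simp <;> ring

lemma sum_obsLossDensity_mul_histPotential_of_eq (ε : ℝ) (A : RAdviceM k n) (u : Fin k) (i : Bool)
    (h : List (RObs k n)) :
    ∑ l, obsLossDensity ε none A (some (u, i)) l *
        histPotential ε u ((A, some (u, i), l) :: h) ≤
      tiltPotential ε (likelihood ε u h) (A u) / ((1 + 4 * ε ^ 2) ^ 2) ^ pulls u h := by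
  let Ψ : Bool → ℝ := fun c => 𝔼 b, tiltPotential ε (tilt ε c (A u) (likelihood ε u h)) b
  have hcons : ∀ l, histPotential ε u ((A, some (u, i), l) :: h) =
      Ψ (i ^^ l) / ((1 + 4 * ε ^ 2) ^ 2) ^ (pulls u h + 1) := fun l => by
    rw [histPotential, sum_batchAdviceDensity_cons_mul_of_eq rfl, likelihood_cons_self,
      pulls_cons_of_eq rfl]
  simp only [hcons, obsLossDensity_none_self]
  rw [sum_half_mul_eq_expect_xor i fun c => Ψ c / ((1 + 4 * ε ^ 2) ^ 2) ^ (pulls u h + 1),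
    ← Finset.expect_div, pow_succ', ← div_div]
  refine div_le_div_of_nonneg_right ?_ (by positivity)
  rw [div_le_iff₀' (by positivity)]
  exact expect_expect_tiltPotential_tilt_le ε _ _

lemma sum_obsLossDensity_mul_histPotential_of_ne (ε : ℝ) (A : RAdviceM k n) {u : Fin k}
    {i : RArm k} (hi : armBatch i ≠ some u) (h : List (RObs k n)) :
    ∑ l, obsLossDensity ε none A i l * histPotential ε u ((A, i, l) :: h) =
      tiltPotential ε (likelihood ε u h) (A u) / ((1 + 4 * ε ^ 2) ^ 2) ^ pulls u h := by
  have hcons : ∀ l, histPotential ε u ((A, i, l) :: h) =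
      tiltPotential ε (likelihood ε u h) (A u) / ((1 + 4 * ε ^ 2) ^ 2) ^ pulls u h := fun l => by
    rw [histPotential, sum_batchAdviceDensity_cons_mul_of_ne hi, likelihood_cons_of_ne ε hi,
      pulls_cons_of_ne hi]
  simp only [hcons, ← Finset.sum_mul, sum_obsLossDensity, one_mul]

lemma step_histPotential_le (ε : ℝ) (u : Fin k) {B : RSBI k n} (hB : IsRSBI B)
    (h : List (RObs k n)) :
    step ε none B (histPotential ε u) h ≤ B.decide h none * histPotential ε u h := by
  refine (step_le_of_sum_le hB u (G := fun a => tiltPotential ε (likelihood ε u h) a /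
    ((1 + 4 * ε ^ 2) ^ 2) ^ pulls u h) fun A i => ?_).trans_eq ?_
  · by_cases hi : armBatch i = some u
    · obtain ⟨⟨_, i⟩, rfl, rfl⟩ := Option.map_eq_some_iff.1 hi
      exact sum_obsLossDensity_mul_histPotential_of_eq ε A _ i h
    · exact (sum_obsLossDensity_mul_histPotential_of_ne ε A hi h).le
  · simp only [histPotential, mul_div_assoc', Finset.sum_div]

lemma haltExp_sq_div_le {ε : ℝ} (hε : |ε| ≤ 1 / 2) (u : Fin k) (hn : n ≠ 0) {B : RSBI k n}
    (hB : IsRSBI B) (T : ℕ) (b : Option (Fin k)) :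
    haltExp ε none B T b (fun h =>
      (𝔼 v, likelihood ε u h v - 1) ^ 2 / ((1 + 4 * ε ^ 2) ^ 2) ^ pulls u h) ≤ 1 / n :=
  (haltExp_le_of_step_le hε none hB T b (histPotential_nonneg ε u) (sq_div_le_histPotential ε u)
    (step_histPotential_le ε u hB)).trans (histPotential_nil_le ε u hn)

/-! ### Good algorithms -/

lemma haltExp_some_one_le {ε : ℝ} (hε : |ε| ≤ 1 / 2) {B : RSBI k n} (hB : IsRSBI B)
    (hgood : GoodSBI ε B) (u : Fin k) (v : Fin n) (T : ℕ) :
    haltExp ε (some (u, v)) B T none 1 ≤ 1 / 20 := by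
  have hpair : outProb ε (some (u, v)) B none + outProb ε (some (u, v)) B (some u) ≤ 1 := by
    rw [← Finset.sum_pair (Option.some_ne_none u).symm]
    exact (Finset.sum_le_sum_of_subset (Finset.subset_univ _)).trans (sum_outProb_le_one hε _ hB)
  have hnone : ENNReal.ofReal (haltExp ε (some (u, v)) B T none 1) ≤
      outProb ε (some (u, v)) B none := by
    rw [outProb_eq_iSup hε _ hB]
    exact le_iSup (fun T => ENNReal.ofReal (haltExp ε (some (u, v)) B T none 1)) T
  have hsum := (add_le_add hnone (hgood (some (u, v)))).trans hpair
  rw [← ENNReal.ofReal_add (haltExp_nonneg hε _ hB T none zero_le_one) (by norm_num),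
    ENNReal.ofReal_le_one] at hsum
  linarith

lemma exists_lt_haltExp_none_one {ε : ℝ} (hε : |ε| ≤ 1 / 2) {B : RSBI k n} (hB : IsRSBI B)
    (hgood : GoodSBI ε B) : ∃ T, 9 / 10 < haltExp ε none B T none 1 := by
  have hout : ENNReal.ofReal (9 / 10) < outProb ε none B none :=
    ((ENNReal.ofReal_lt_ofReal_iff (by norm_num)).2 (by norm_num)).trans_le (hgood none)
  rw [outProb_eq_iSup hε _ hB, lt_iSup_iff] at hout
  exact hout.imp fun T hT => (ENNReal.ofReal_lt_ofReal_iff_of_nonneg (by norm_num)).1 hT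

lemma haltExp_expect_likelihood_le {ε : ℝ} (hε : |ε| ≤ 1 / 2) {B : RSBI k n} (hB : IsRSBI B)
    (hgood : GoodSBI ε B) (u : Fin k) (hn : n ≠ 0) (T : ℕ) :
    haltExp ε none B T none (fun h => 𝔼 v, likelihood ε u h v) ≤ 1 / 20 := by
  have : NeZero n := ⟨hn⟩
  have hexpect : haltExp ε none B T none (fun h => 𝔼 v, likelihood ε u h v) =
      𝔼 v, haltExp ε (some (u, v)) B T none 1 := by
    simp only [haltExp_some, Pi.one_apply, Fintype.expect_eq_sum_div_card, div_eq_inv_mul,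
      ← map_sum, ← smul_eq_mul, ← map_smul]
    exact congrArg _ (funext fun h => by simp)
  rw [hexpect]
  exact Finset.expect_le Finset.univ_nonempty fun v _ => haltExp_some_one_le hε hB hgood u v T

lemma log_div_le_haltExp_pulls {ε : ℝ} (hε₀ : ε ≠ 0) (hε : |ε| ≤ 1 / 2) {B : RSBI k n}
    (hB : IsRSBI B) (hgood : GoodSBI ε B) {T : ℕ} (hT : 9 / 10 < haltExp ε none B T none 1)
    (u : Fin k) :
    Real.log (n / 10) / (20 * ε ^ 2) ≤ haltExp ε none B T none fun h => (pulls u h : ℝ) := by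
  have hpulls : 0 ≤ haltExp ε none B T none fun h => (pulls u h : ℝ) :=
    haltExp_nonneg hε none hB T none fun h => Nat.cast_nonneg _
  rcases le_or_gt (Real.log (n / 10)) 0 with hlog | hlog
  · exact (div_nonpos_of_nonpos_of_nonneg hlog (by positivity)).trans hpulls
  have hy : (1 : ℝ) < n / 10 := (Real.log_pos_iff (by positivity)).1 hlog
  have hn : n ≠ 0 := by rintro rfl; norm_num at hy
  let E := haltExp ε none B T none
  let mean : List (RObs k n) → ℝ := fun h => 𝔼 v, likelihood ε u h v
  let dev : List (RObs k n) → ℝ := fun h =>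
    (mean h - 1) ^ 2 / ((1 + 4 * ε ^ 2) ^ 2) ^ pulls u h
  let count : List (RObs k n) → ℝ := fun h => pulls u h
  have hmono : E ((3 / 4 : ℝ) • 1) ≤ E (mean + (n / 10 : ℝ) • dev +
      (2 * (4 * ε ^ 2) / Real.log (n / 10)) • count) :=
    haltExp_mono hε none hB T none fun h => by
      have hmean : 0 ≤ mean h := Finset.expect_nonneg fun v _ => likelihood_nonneg hε u h v
      simpa [dev, count] using three_quarters_le hmean hy (by positivity : 0 ≤ 4 * ε ^ 2) _
  simp only [map_add, map_smul, smul_eq_mul] at hmono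
  have hmean : E mean ≤ 1 / 20 := haltExp_expect_likelihood_le hε hB hgood u hn T
  have hdev : (n / 10 : ℝ) * E dev ≤ 1 / 10 := by
    calc (n / 10 : ℝ) * E dev ≤ n / 10 * (1 / n) :=
          mul_le_mul_of_nonneg_left (haltExp_sq_div_le hε u hn hB T none) (by positivity)
      _ = 1 / 10 := by field_simp
  have hcount : 1 / 2 ≤ 2 * (4 * ε ^ 2) / Real.log (n / 10) * E count := by linarith
  rw [div_mul_eq_mul_div, div_le_div_iff₀ two_pos hlog] at hcount
  rw [div_le_iff₀ (by positivity)]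
  linarith [mul_nonneg (sq_nonneg ε) hpulls]

lemma sum_haltExp_pulls_le {ε : ℝ} (hε : |ε| ≤ 1 / 2) (s : RStrategy k n) {B : RSBI k n}
    (hB : IsRSBI B) (T : ℕ) (b : Option (Fin k)) :
    ∑ u, haltExp ε s B T b (fun h => (pulls u h : ℝ)) ≤
      ∑ t ∈ Finset.range T, surviveProb ε s B (t + 1) := by
  rw [← map_sum]
  refine (haltExp_mono hε s hB T b fun h => ?_).trans
    (haltExp_length_le_sum_surviveProb hε s hB T b)
  rw [Finset.sum_apply]
  exact_mod_cast sum_pulls_le_length h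

lemma ofReal_sum_surviveProb_le_expRounds {ε : ℝ} (hε : |ε| ≤ 1 / 2) (s : RStrategy k n)
    {B : RSBI k n} (hB : IsRSBI B) (T : ℕ) :
    ENNReal.ofReal (∑ t ∈ Finset.range T, surviveProb ε s B (t + 1)) ≤ expRounds ε s B := by
  rw [ENNReal.ofReal_sum_of_nonneg fun t _ => surviveProb_nonneg hε s hB (t + 1)]
  exact ENNReal.sum_le_tsum _

end Interaction

end BwE

theorem stmt13_general (k n : ℕ) (ε : ℝ) (hε₀ : ε ≠ 0) (hε : |ε| ≤ 1 / 2) (B : RSBI k n)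
    (hB : IsRSBI B) (hgood : GoodSBI ε B) :
    ENNReal.ofReal ((k : ℝ) * Real.log ((n : ℝ) / 10) / (20 * ε ^ 2))
      ≤ expRounds ε (none : RStrategy k n) B := by
  obtain ⟨T, hT⟩ := BwE.exists_lt_haltExp_none_one hε hB hgood
  refine (ENNReal.ofReal_le_ofReal ?_).trans (BwE.ofReal_sum_surviveProb_le_expRounds hε none hB T)
  calc (k : ℝ) * Real.log (n / 10) / (20 * ε ^ 2)
      = ∑ _u : Fin k, Real.log (n / 10) / (20 * ε ^ 2) := by simp [mul_div_assoc]
    _ ≤ ∑ u, BwE.haltExp ε none B T none fun h => (BwE.pulls u h : ℝ) :=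
        Finset.sum_le_sum fun u _ => BwE.log_div_le_haltExp_pulls hε₀ hε hB hgood hT u
    _ ≤ ∑ t ∈ Finset.range T, surviveProb ε none B (t + 1) :=
        BwE.sum_haltExp_pulls_le hε none hB T none

/-- every good SBI algorithm satisfies
`T(A', S_0) ≥ k·ln(n/10)/(20ε²)`. -/
theorem stmt13 (k n : ℕ) (hk : 1 ≤ k) (hn : 10 ≤ n) (ε : ℝ) (hε : 0 < ε) (hε' : ε ≤ 0.1)
    (B : RSBI k n) (hB : IsRSBI B) (hgood : GoodSBI ε B) :
    ENNReal.ofReal ((k : ℝ) * Real.log ((n : ℝ) / 10) / (20 * ε ^ 2))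
      ≤ expRounds ε (none : RStrategy k n) B := by
  have hε_abs : |ε| ≤ 1 / 2 := (abs_of_pos hε).trans_le (hε'.trans (by norm_num))
  exact stmt13_general k n ε hε.ne' hε_abs B hB hgood
end
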